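/- arXiv:2508.17470 — 3 statements merged into one kernel-verified Lean document; each statement's English description precedes it below -/
import Mathlib

section
/- Let 0 ≤ α < n, m ∈ ℕ with m > 1 − α/n, 0 < p ≤ 1, d_p = ⌊n(1/p − 1)⌋, and 1/q = 1/p − α/n, and let T_{α,m} be the discrete fractional series operator. Then there exists a constant C > 0, independent of the atom, such that for every (p,∞,d_p)-atom a centered at a discrete cube Q = {i : |i − i_0|_∞ ≤ N}, one has Σ_{k=1}^m Σ_{j ∈ Q*_k} |(T_{α,m} a)(j)|^q ≤ C, where Q*_k = {i ∈ ℤ^n : |i − A_k^{-1} i_0|_∞ ≤ 4DN} and D = max{‖A_k^{-1}‖ : k = 1, …, m}. -/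
open scoped ENNReal BigOperators Classical

noncomputable def eucZ {n : ℕ} (v : Fin n → ℤ) : ℝ :=
  Real.sqrt (∑ k, ((v k : ℝ)) ^ 2)

noncomputable def eucR {n : ℕ} (v : Fin n → ℝ) : ℝ :=
  Real.sqrt (∑ k, (v k) ^ 2)

noncomputable def lpNorm {n : ℕ} (p : ℝ) (b : (Fin n → ℤ) → ℝ) : ℝ≥0∞ :=
  (∑' i : Fin n → ℤ, ENNReal.ofReal |b i| ^ p) ^ (1 / p)

noncomputable def Tfs {n m : ℕ} (al : Fin m → ℝ) (A : Fin m → Matrix (Fin n) (Fin n) ℤ)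
    (b : (Fin n → ℤ) → ℝ) (j : Fin n → ℤ) : ℝ≥0∞ :=
  ∑' i : Fin n → ℤ,
    if ∀ k, i ≠ (A k).mulVec j then
      ENNReal.ofReal (|b i| / ∏ k, eucZ (i - (A k).mulVec j) ^ (al k))
    else 0

noncomputable def Mfr {n : ℕ} (γ : ℝ) (b : (Fin n → ℤ) → ℝ) (j : Fin n → ℤ) : ℝ≥0∞ :=
  ⨆ N : ℕ, ENNReal.ofReal ((2 * (N : ℝ) + 1) ^ (γ - (n : ℝ)) *
    ∑ i ∈ Finset.Icc (fun k => j k - (N : ℤ)) (fun k => j k + (N : ℤ)), |b i|)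

noncomputable def Iop {n : ℕ} (α : ℝ) (b : (Fin n → ℤ) → ℝ) (j : Fin n → ℤ) : ℝ≥0∞ :=
  ∑' i : Fin n → ℤ, if i ≠ j then ENNReal.ofReal (|b i| / eucZ (i - j) ^ ((n : ℝ) - α)) else 0

def IsPAtom {n : ℕ} (p : ℝ) (d : ℕ) (a : (Fin n → ℤ) → ℝ) (i0 : Fin n → ℤ) (N : ℕ) : Prop :=
  (∀ i : Fin n → ℤ, a i ≠ 0 → ∀ t, |i t - i0 t| ≤ (N : ℤ)) ∧
  (∀ i : Fin n → ℤ, |a i| ≤ ((2 * (N : ℝ) + 1) ^ n) ^ (-(1 / p))) ∧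
  (∀ β : Fin n → ℕ, (∑ t, β t) ≤ d →
    ∑ i ∈ Finset.Icc (fun t => i0 t - (N : ℤ)) (fun t => i0 t + (N : ℤ)),
      (∏ t, ((i t : ℝ)) ^ (β t)) * a i = 0)

/-- one-dimensional weight -/
lemma sum_pow_aux (σ : ℝ) (h0 : 0 < σ) (h1 : σ < 1) (M : ℕ) :
    ∑ x ∈ Finset.range M, ((x : ℝ) + 1) ^ (-σ) ≤ (M : ℝ) ^ (1 - σ) / (1 - σ) := by
  have hs : 0 < 1 - σ := by linarith
  induction M with
  | zero => simp [Real.zero_rpow hs.ne']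
  | succ k ih =>
    rw [Finset.sum_range_succ]
    have hk : (0 : ℝ) < (k : ℝ) + 1 := by positivity
    have hb := rpow_one_add_le_one_add_mul_self (s := -1 / ((k : ℝ) + 1)) (p := 1 - σ)
      (by rw [le_div_iff₀ hk]; nlinarith [(Nat.cast_nonneg k : (0 : ℝ) ≤ k)]) hs.le (by linarith)
    have e1 : 1 + -1 / ((k : ℝ) + 1) = k / (k + 1) := by field_simp; ring
    rw [e1, Real.div_rpow (by positivity) hk.le, div_le_iff₀ (by positivity)] at hb
    have e2 : ((k : ℝ) + 1) ^ (1 - σ) = (k + 1) * ((k : ℝ) + 1) ^ (-σ) := by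
      rw [sub_eq_add_neg, Real.rpow_add hk, Real.rpow_one]
    have e3 : (1 + (1 - σ) * (-1 / ((k : ℝ) + 1))) * ((k : ℝ) + 1) ^ (1 - σ)
        = ((k : ℝ) + 1) ^ (1 - σ) - (1 - σ) * ((k : ℝ) + 1) ^ (-σ) := by
      rw [e2]; field_simp; ring
    rw [e3] at hb
    push_cast
    rw [le_div_iff₀ hs] at ih ⊢
    nlinarith

/-- one-dimensional rearrangement bound -/
lemma one_dim (σ : ℝ) (h0 : 0 < σ) (h1 : σ < 1) (S : Finset ℤ) (X : ℝ) (hX : 1 ≤ X)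
    (hS : (S.card : ℝ) ≤ X) (c : ℤ) :
    ∑ x ∈ S, (max |((x - c : ℤ) : ℝ)| 1) ^ (-σ) ≤ (2 + 2 / (1 - σ)) * X ^ (1 - σ) := by
  have hs : 0 < 1 - σ := by linarith
  have hXp : 0 < X := by linarith
  set M := ⌊X⌋₊
  have hM : (M : ℝ) ≤ X := Nat.floor_le hXp.le
  have hM' : X < M + 1 := Nat.lt_floor_add_one X
  set f : ℤ → ℝ := fun x => (max |(x : ℝ)| 1) ^ (-σ) with hf
  have fnn : ∀ x, 0 ≤ f x := fun x => by simp only [hf]; positivity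
  have hfar : ∀ x : ℤ, x ∉ Finset.Ioo (-(M + 1 : ℤ)) (M + 1) → f x ≤ X ^ (-σ) := by
    intro x hx
    apply Real.rpow_le_rpow_of_nonpos hXp _ (by linarith)
    apply le_max_of_le_left
    have : (M : ℤ) + 1 ≤ |x| := by
      rw [Finset.mem_Ioo] at hx
      by_contra h
      push Not at h
      exact hx (abs_lt.1 h)
    have h2 : ((M : ℝ) + 1) ≤ |(x : ℝ)| := by exact_mod_cast this
    linarith
  have hnear : ∑ x ∈ Finset.Ioo (-(M + 1 : ℤ)) (M + 1), f x ≤ 1 + 2 * (X ^ (1 - σ) / (1 - σ)) := by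
    have hsub : Finset.Ioo (-(M + 1 : ℤ)) (M + 1) ⊆
        ({0} ∪ (Finset.range M).image (fun x : ℕ => (x : ℤ) + 1)) ∪
          (Finset.range M).image (fun x : ℕ => -((x : ℤ) + 1)) := by
      intro x hx
      simp only [Finset.mem_Ioo] at hx
      simp only [Finset.mem_union, Finset.mem_singleton, Finset.mem_image, Finset.mem_range]
      rcases lt_trichotomy x 0 with h | h | h
      · right; exact ⟨(-x - 1).toNat, by omega, by omega⟩
      · left; left; exact h
      · left; right; exact ⟨(x - 1).toNat, by omega, by omega⟩
    have u : ∀ s t : Finset ℤ, ∑ x ∈ s ∪ t, f x ≤ ∑ x ∈ s, f x + ∑ x ∈ t, f x := by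
      intro s t
      rw [← Finset.sum_union_inter]
      have := Finset.sum_nonneg (s := s ∩ t) (fun x _ => fnn x)
      linarith
    have hsum := sum_pow_aux σ h0 h1 M
    have hXM : (M : ℝ) ^ (1 - σ) / (1 - σ) ≤ X ^ (1 - σ) / (1 - σ) := by
      gcongr
    have p1 : ∑ x ∈ (Finset.range M).image (fun x : ℕ => (x : ℤ) + 1), f x ≤ X ^ (1 - σ) / (1 - σ) := by
      rw [Finset.sum_image (by intro a _ b _ h; simpa using h)]
      refine le_trans (le_of_eq ?_) (hsum.trans hXM)
      refine Finset.sum_congr rfl fun x _ => ?_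
      simp only [hf]
      congr 1
      push_cast
      rw [abs_of_nonneg (by positivity), max_eq_left]
      linarith [(Nat.cast_nonneg x : (0 : ℝ) ≤ x)]
    have p2 : ∑ x ∈ (Finset.range M).image (fun x : ℕ => -((x : ℤ) + 1)), f x ≤ X ^ (1 - σ) / (1 - σ) := by
      rw [Finset.sum_image (by intro a _ b _ h; simpa using h)]
      refine le_trans (le_of_eq ?_) (hsum.trans hXM)
      refine Finset.sum_congr rfl fun x _ => ?_
      simp only [hf]
      congr 1
      push_cast
      rw [abs_neg, abs_of_nonneg (by positivity), max_eq_left]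
      linarith [(Nat.cast_nonneg x : (0 : ℝ) ≤ x)]
    have p0 : ∑ x ∈ ({0} : Finset ℤ), f x = 1 := by simp [hf]
    have := Finset.sum_le_sum_of_subset_of_nonneg (f := f) hsub (fun x _ _ => fnn x)
    have := u ({0} ∪ (Finset.range M).image (fun x : ℕ => (x : ℤ) + 1))
      ((Finset.range M).image (fun x : ℕ => -((x : ℤ) + 1)))
    have := u {0} ((Finset.range M).image (fun x : ℕ => (x : ℤ) + 1))
    linarith
  set S' := S.image (fun x => x - c)
  have e : ∑ x ∈ S, (max |((x - c : ℤ) : ℝ)| 1) ^ (-σ) = ∑ x ∈ S', f x := by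
    rw [Finset.sum_image (by intro a _ b _ h; simpa using h)]
  have hc : (S'.card : ℝ) ≤ X := le_trans (by exact_mod_cast Finset.card_image_le) hS
  have key : ∑ x ∈ S', f x ≤ ∑ x ∈ S', X ^ (-σ) + ∑ x ∈ Finset.Ioo (-(M + 1 : ℤ)) (M + 1), f x := by
    rw [← Finset.sum_filter_add_sum_filter_not S' (· ∈ Finset.Ioo (-(M + 1 : ℤ)) (M + 1)), add_comm]
    apply add_le_add
    · refine le_trans (Finset.sum_le_sum (g := fun _ => X ^ (-σ)) ?_) ?_
      · intro x hx
        exact hfar x (Finset.mem_filter.1 hx).2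
      · exact Finset.sum_le_sum_of_subset_of_nonneg (Finset.filter_subset _ _)
          (fun _ _ _ => by positivity)
    · refine Finset.sum_le_sum_of_subset_of_nonneg ?_ (fun x _ _ => fnn x)
      intro x hx
      exact (Finset.mem_filter.1 hx).2
  rw [e]
  rw [Finset.sum_const, nsmul_eq_mul] at key
  have e4 : X ^ (1 - σ) = X * X ^ (-σ) := by
    rw [sub_eq_add_neg, Real.rpow_add hXp, Real.rpow_one]
  have e5 : (S'.card : ℝ) * X ^ (-σ) ≤ X ^ (1 - σ) := by rw [e4]; gcongr
  have e6 : 1 ≤ X ^ (1 - σ) := Real.one_le_rpow hX hs.le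
  have e7 : (2 + 2 / (1 - σ)) * X ^ (1 - σ) = 2 * X ^ (1 - σ) + 2 * (X ^ (1 - σ) / (1 - σ)) := by
    ring
  linarith

noncomputable def gw {n : ℕ} (s : ℝ) (v : Fin n → ℤ) : ℝ :=
  ∏ t, (max |(v t : ℝ)| 1) ^ (-(s / n))

lemma gw_nonneg {n : ℕ} (s : ℝ) (v : Fin n → ℤ) : 0 ≤ gw s v :=
  Finset.prod_nonneg fun _ _ => by positivity

lemma one_le_norm {n : ℕ} (v : Fin n → ℤ) (hv : v ≠ 0) : 1 ≤ ‖v‖ := by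
  obtain ⟨t, ht⟩ := Function.ne_iff.1 hv
  refine le_trans ?_ (norm_le_pi_norm v t)
  rw [Int.norm_eq_abs]
  exact_mod_cast Int.one_le_abs ht

lemma norm_le_eucZ {n : ℕ} (v : Fin n → ℤ) : ‖v‖ ≤ eucZ v := by
  unfold eucZ
  rw [pi_norm_le_iff_of_nonneg (Real.sqrt_nonneg _)]
  intro t
  rw [Int.norm_eq_abs]
  apply Real.abs_le_sqrt
  exact Finset.single_le_sum (f := fun k => ((v k : ℝ)) ^ 2) (fun _ _ => sq_nonneg _) (Finset.mem_univ t)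

lemma norm_rpow_le_gw {n : ℕ} (hn : 1 ≤ n) (s : ℝ) (hs : 0 < s) (v : Fin n → ℤ) (hv : v ≠ 0) :
    ‖v‖ ^ (-s) ≤ gw s v := by
  have h1 := one_le_norm v hv
  have hn' : (0 : ℝ) < n := by exact_mod_cast hn
  have : ‖v‖ ^ (-s) = ∏ t : Fin n, ‖v‖ ^ (-(s / n)) := by
    rw [Finset.prod_const, Finset.card_univ, Fintype.card_fin, ← Real.rpow_natCast,
      ← Real.rpow_mul (norm_nonneg _)]
    congr 1
    field_simp
  rw [this]
  refine Finset.prod_le_prod (fun _ _ => by positivity) fun t _ => ?_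
  apply Real.rpow_le_rpow_of_nonpos (by positivity)
  · apply max_le _ h1
    have := norm_le_pi_norm v t
    rwa [Int.norm_eq_abs] at this
  · have : 0 < s / n := by positivity
    linarith

lemma box_bound {n : ℕ} (hn : 1 ≤ n) (s : ℝ) (hs : 0 < s) (hsn : s < n) :
    ∃ C : ℝ, 0 < C ∧ ∀ (S : Fin n → Finset ℤ) (X : ℝ), 1 ≤ X → (∀ t, ((S t).card : ℝ) ≤ X) →
      ∀ c : Fin n → ℤ, ∑ i ∈ Fintype.piFinset S, gw s (i - c) ≤ C * X ^ ((n : ℝ) - s) := by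
  have hn' : (0 : ℝ) < n := by exact_mod_cast hn
  have hσ0 : 0 < s / n := by positivity
  have hσ1 : s / n < 1 := by rw [div_lt_one hn']; exact hsn
  have hσ2 : 0 < 1 - s / n := by linarith
  refine ⟨(2 + 2 / (1 - s / n)) ^ n, by positivity, ?_⟩
  intro S X hX hS c
  have : ∑ i ∈ Fintype.piFinset S, gw s (i - c) =
      ∏ t, ∑ x ∈ S t, (max |((x - c t : ℤ) : ℝ)| 1) ^ (-(s / n)) := by
    rw [Finset.prod_univ_sum]
    rfl
  rw [this]
  refine le_trans (Finset.prod_le_prod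
    (g := fun _ => (2 + 2 / (1 - s / n)) * X ^ (1 - s / n)) ?_ ?_) ?_
  · intro t _
    exact Finset.sum_nonneg fun _ _ => by positivity
  · intro t _
    exact one_dim _ hσ0 hσ1 (S t) X hX (hS t) (c t)
  · rw [Finset.prod_const, Finset.card_univ, Fintype.card_fin, mul_pow, ← Real.rpow_natCast (X ^ _),
      ← Real.rpow_mul (by linarith)]
    apply le_of_eq
    congr 2
    field_simp

lemma card_box {n : ℕ} (S : Fin n → Finset ℤ) (X : ℝ) (hS : ∀ t, ((S t).card : ℝ) ≤ X) :
    ((Fintype.piFinset S).card : ℝ) ≤ X ^ n := by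
  rw [Fintype.card_piFinset]
  push_cast
  refine le_trans (Finset.prod_le_prod (g := fun _ => X) (fun _ _ => by positivity)
    fun t _ => hS t) ?_
  simp

lemma mulVec_bound {n : ℕ} (M : Matrix (Fin n) (Fin n) ℤ) (hM : M.det ≠ 0) :
    ∃ c : ℝ, 0 < c ∧ ∀ j : Fin n → ℤ, ‖j‖ ≤ c * ‖M.mulVec j‖ := by
  refine ⟨1 + ∑ s, ∑ t, |(M.adjugate s t : ℝ)|, by positivity, fun j => ?_⟩
  have h1 : M.adjugate.mulVec (M.mulVec j) = M.det • j := by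
    rw [Matrix.mulVec_mulVec, Matrix.adjugate_mul, Matrix.smul_mulVec, Matrix.one_mulVec]
  rw [pi_norm_le_iff_of_nonneg (by positivity)]
  intro s
  have h2 := congrFun h1 s
  simp only [Matrix.mulVec, dotProduct, Pi.smul_apply, smul_eq_mul] at h2
  set w : Fin n → ℤ := M.mulVec j with hw
  have h2 : ∑ t, M.adjugate s t * w t = M.det * j s := h2
  have h3 : |((M.det * j s : ℤ) : ℝ)| ≤ (∑ t, |(M.adjugate s t : ℝ)|) * ‖w‖ := by
    rw [← h2]
    push_cast
    refine (Finset.abs_sum_le_sum_abs _ _).trans ?_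
    rw [Finset.sum_mul]
    refine Finset.sum_le_sum fun t _ => ?_
    rw [abs_mul]
    have := norm_le_pi_norm w t
    rw [Int.norm_eq_abs] at this
    gcongr
  have h4 : (∑ t, |(M.adjugate s t : ℝ)|) ≤ ∑ s, ∑ t, |(M.adjugate s t : ℝ)| :=
    Finset.single_le_sum (f := fun s => ∑ t, |(M.adjugate s t : ℝ)|)
      (fun _ _ => by positivity) (Finset.mem_univ s)
  have h5 : ‖j s‖ ≤ |((M.det * j s : ℤ) : ℝ)| := by
    rw [Int.norm_eq_abs, Int.cast_mul, abs_mul]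
    have : (1 : ℝ) ≤ |(M.det : ℝ)| := by exact_mod_cast Int.one_le_abs hM
    nlinarith [abs_nonneg (j s : ℝ)]
  have h6 := norm_nonneg w
  nlinarith

noncomputable def Kr {n m : ℕ} (al : Fin m → ℝ) (A : Fin m → Matrix (Fin n) (Fin n) ℤ)
    (i j : Fin n → ℤ) : ℝ :=
  if ∀ k, i ≠ (A k).mulVec j then 1 / ∏ k, eucZ (i - (A k).mulVec j) ^ (al k) else 0

lemma eucZ_nonneg {n : ℕ} (v : Fin n → ℤ) : 0 ≤ eucZ v := Real.sqrt_nonneg _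

lemma Kr_nonneg {n m : ℕ} (al : Fin m → ℝ) (A : Fin m → Matrix (Fin n) (Fin n) ℤ)
    (i j : Fin n → ℤ) : 0 ≤ Kr al A i j := by
  unfold Kr
  split_ifs
  · exact div_nonneg zero_le_one
      (Finset.prod_nonneg fun k _ => Real.rpow_nonneg (eucZ_nonneg _) _)
  · exact le_rfl

lemma Kr_le_prod {n m : ℕ} (al : Fin m → ℝ) (hal : ∀ k, 0 < al k)
    (A : Fin m → Matrix (Fin n) (Fin n) ℤ)
    (i j : Fin n → ℤ) (h : ∀ k, i ≠ (A k).mulVec j) :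
    Kr al A i j ≤ ∏ k, ‖i - (A k).mulVec j‖ ^ (-al k) := by
  unfold Kr
  rw [if_pos h, one_div, ← Finset.prod_inv_distrib]
  refine Finset.prod_le_prod (fun k _ => inv_nonneg.2 (Real.rpow_nonneg (eucZ_nonneg _) _))
    fun k _ => ?_
  have h1 := one_le_norm _ (sub_ne_zero.2 (h k))
  have h2 := norm_le_eucZ (i - (A k).mulVec j)
  rw [← Real.rpow_neg (eucZ_nonneg _)]
  exact Real.rpow_le_rpow_of_nonpos (by linarith) h2 (by linarith [hal k])

lemma Kr_le_one {n m : ℕ} (al : Fin m → ℝ) (hal : ∀ k, 0 < al k)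
    (A : Fin m → Matrix (Fin n) (Fin n) ℤ) (i j : Fin n → ℤ) : Kr al A i j ≤ 1 := by
  by_cases h : ∀ k, i ≠ (A k).mulVec j
  · refine (Kr_le_prod al hal A i j h).trans ?_
    refine Finset.prod_le_one (fun k _ => by positivity) fun k _ => ?_
    exact Real.rpow_le_one_of_one_le_of_nonpos (one_le_norm _ (sub_ne_zero.2 (h k)))
      (by linarith [hal k])
  · unfold Kr
    rw [if_neg h]
    exact zero_le_one

lemma Kr_le_sum {n m : ℕ} (hn : 1 ≤ n) (al : Fin m → ℝ) (hal : ∀ k, 0 < al k)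
    (s : ℝ) (hs : 0 < s) (hsum : ∑ k, al k = s)
    (A : Fin m → Matrix (Fin n) (Fin n) ℤ) (i j : Fin n → ℤ) :
    Kr al A i j ≤ ∑ k, gw s (i - (A k).mulVec j) := by
  by_cases h : ∀ k, i ≠ (A k).mulVec j
  · refine (Kr_le_prod al hal A i j h).trans ?_
    have hne : (Finset.univ : Finset (Fin m)).Nonempty := by
      rw [Finset.nonempty_iff_ne_empty]
      intro h0
      rw [h0] at hsum
      simp at hsum
      linarith
    obtain ⟨k0, -, hk0⟩ := Finset.exists_min_image Finset.univ
      (fun k => ‖i - (A k).mulVec j‖) hne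
    have h1 := one_le_norm _ (sub_ne_zero.2 (h k0))
    have hpos : 0 < ‖i - (A k0).mulVec j‖ := by linarith
    calc ∏ k, ‖i - (A k).mulVec j‖ ^ (-al k) ≤ ∏ k, ‖i - (A k0).mulVec j‖ ^ (-al k) :=
          Finset.prod_le_prod (fun k _ => by positivity) fun k _ =>
            Real.rpow_le_rpow_of_nonpos hpos (hk0 k (Finset.mem_univ k)) (by linarith [hal k])
      _ = ‖i - (A k0).mulVec j‖ ^ (-s) := by
          rw [← Real.rpow_sum_of_pos hpos, Finset.sum_neg_distrib, hsum]
      _ ≤ gw s (i - (A k0).mulVec j) := norm_rpow_le_gw hn s hs _ (sub_ne_zero.2 (h k0))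
      _ ≤ _ := Finset.single_le_sum (f := fun k => gw s (i - (A k).mulVec j))
          (fun k _ => gw_nonneg _ _) (Finset.mem_univ k0)
  · unfold Kr
    rw [if_neg h]
    exact Finset.sum_nonneg fun k _ => gw_nonneg _ _

lemma Kr_le_two {n m : ℕ} (hn : 1 ≤ n) (al : Fin m → ℝ) (hal : ∀ k, 0 < al k)
    (hlt : ∀ k, al k < n) (hsum : ∑ k, al k = n)
    (A : Fin m → Matrix (Fin n) (Fin n) ℤ)
    (hA0 : ∀ k l, k ≠ l → (A k - A l).det ≠ 0) :
    ∃ C : ℝ, 0 < C ∧ ∀ i j : Fin n → ℤ, j ≠ 0 →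
    Kr al A i j ≤ C * ∑ k, gw (al k) (i - (A k).mulVec j) * gw ((n : ℝ) - al k) j := by
  have hn' : (0 : ℝ) < n := by exact_mod_cast hn
  have hc : ∀ k l, ∃ c : ℝ, 0 < c ∧ (k ≠ l → ∀ j : Fin n → ℤ, ‖j‖ ≤ c * ‖(A k - A l).mulVec j‖) := by
    intro k l
    by_cases hkl : k = l
    · exact ⟨1, one_pos, fun h => absurd hkl h⟩
    · obtain ⟨c, h1, h2⟩ := mulVec_bound _ (hA0 k l hkl)
      exact ⟨c, h1, fun _ => h2⟩
  choose c hc0 hc1 using hc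
  set c' : ℝ := 1 + ∑ k, ∑ l, 2 * c k l with hc'
  have hcc : ∀ k l, 2 * c k l ≤ c' := by
    intro k l
    have h1 : 2 * c k l ≤ ∑ l, 2 * c k l :=
      Finset.single_le_sum (f := fun l => 2 * c k l) (fun l _ => by have := hc0 k l; positivity)
        (Finset.mem_univ l)
    have h2 : ∑ l, 2 * c k l ≤ ∑ k, ∑ l, 2 * c k l :=
      Finset.single_le_sum (f := fun k => ∑ l, 2 * c k l)
        (fun k _ => Finset.sum_nonneg fun l _ => by have := hc0 k l; positivity)
        (Finset.mem_univ k)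
    linarith
  have hc'1 : 1 ≤ c' := by
    have : 0 ≤ ∑ k, ∑ l, 2 * c k l :=
      Finset.sum_nonneg fun k _ => Finset.sum_nonneg fun l _ => by have := hc0 k l; positivity
    linarith
  have hc'0 : 0 < c' := by linarith
  refine ⟨c' ^ (n : ℝ), by positivity, ?_⟩
  intro i j hj
  have hj1 := one_le_norm j hj
  by_cases h : ∀ k, i ≠ (A k).mulVec j
  · refine (Kr_le_prod al hal A i j h).trans ?_
    have hne : (Finset.univ : Finset (Fin m)).Nonempty := by
      rw [Finset.nonempty_iff_ne_empty]
      intro h0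
      rw [h0] at hsum
      simp at hsum
      linarith
    obtain ⟨k0, -, hk0⟩ := Finset.exists_min_image Finset.univ
      (fun k => ‖i - (A k).mulVec j‖) hne
    have hE : 0 < ‖j‖ / c' := by positivity
    have hother : ∀ l, l ≠ k0 → ‖j‖ / c' ≤ ‖i - (A l).mulVec j‖ := by
      intro l hl
      have h1 := hc1 l k0 hl j
      have h2 : (A l - A k0).mulVec j = (i - (A k0).mulVec j) - (i - (A l).mulVec j) := by
        rw [Matrix.sub_mulVec]; abel
      have h3 := norm_sub_le (i - (A k0).mulVec j) (i - (A l).mulVec j)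
      rw [← h2] at h3
      have h4 := hk0 l (Finset.mem_univ l)
      have h5 := hcc l k0
      have h6 := hc0 l k0
      rw [div_le_iff₀ hc'0]
      have h7 : ‖(A l - A k0).mulVec j‖ ≤ 2 * ‖i - (A l).mulVec j‖ := by linarith
      have h8 := norm_nonneg (i - (A l).mulVec j)
      calc ‖j‖ ≤ c l k0 * (2 * ‖i - (A l).mulVec j‖) := h1.trans (by gcongr)
        _ = (2 * c l k0) * ‖i - (A l).mulVec j‖ := by ring
        _ ≤ c' * ‖i - (A l).mulVec j‖ := by gcongr
        _ = _ := by ring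
    have hsum' : ∑ l ∈ Finset.univ.erase k0, al l = n - al k0 := by
      rw [← hsum, ← Finset.add_sum_erase Finset.univ al (Finset.mem_univ k0)]; ring
    have hterm : ∏ k, ‖i - (A k).mulVec j‖ ^ (-al k) ≤
        c' ^ (n : ℝ) * (gw (al k0) (i - (A k0).mulVec j) * gw ((n : ℝ) - al k0) j) := by
      rw [← Finset.mul_prod_erase Finset.univ _ (Finset.mem_univ k0)]
      have p1 : ∏ l ∈ Finset.univ.erase k0, ‖i - (A l).mulVec j‖ ^ (-al l) ≤
          (‖j‖ / c') ^ (-((n : ℝ) - al k0)) := by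
        rw [← hsum', ← Finset.sum_neg_distrib, Real.rpow_sum_of_pos hE]
        refine Finset.prod_le_prod (fun k _ => by positivity) fun l hl => ?_
        exact Real.rpow_le_rpow_of_nonpos hE (hother l (Finset.ne_of_mem_erase hl))
          (by linarith [hal l])
      have p2 : (‖j‖ / c') ^ (-((n : ℝ) - al k0)) ≤ c' ^ (n : ℝ) * gw ((n : ℝ) - al k0) j := by
        rw [Real.div_rpow (norm_nonneg _) hc'0.le, div_eq_inv_mul, ← Real.rpow_neg hc'0.le, neg_neg]
        have := hlt k0
        have := norm_rpow_le_gw hn ((n : ℝ) - al k0) (by linarith) j hj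
        have h9 : c' ^ ((n : ℝ) - al k0) ≤ c' ^ (n : ℝ) :=
          Real.rpow_le_rpow_of_exponent_le hc'1 (by linarith [hal k0])
        gcongr
      have p3 := norm_rpow_le_gw hn (al k0) (hal k0) _ (sub_ne_zero.2 (h k0))
      calc _ ≤ gw (al k0) (i - (A k0).mulVec j) * (c' ^ (n : ℝ) * gw ((n : ℝ) - al k0) j) :=
            mul_le_mul p3 (p1.trans p2) (Finset.prod_nonneg fun _ _ => by positivity)
              (gw_nonneg _ _)
        _ = _ := by ring
    refine hterm.trans ?_
    gcongr
    exact Finset.single_le_sum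
      (f := fun k => gw (al k) (i - (A k).mulVec j) * gw ((n : ℝ) - al k) j)
      (fun k _ => mul_nonneg (gw_nonneg _ _) (gw_nonneg _ _)) (Finset.mem_univ k0)
  · unfold Kr
    rw [if_neg h]
    exact mul_nonneg (by positivity)
      (Finset.sum_nonneg fun k _ => mul_nonneg (gw_nonneg _ _) (gw_nonneg _ _))

lemma dbl {n m : ℕ} (hn : 1 ≤ n) (al : Fin m → ℝ) (hal : ∀ k, 0 < al k)
    (hlt : ∀ k, al k < n) (hsum : ∑ k, al k = n)
    (A : Fin m → Matrix (Fin n) (Fin n) ℤ)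
    (hA0 : ∀ k l, k ≠ l → (A k - A l).det ≠ 0) :
    ∃ C : ℝ, 0 < C ∧ ∀ (S S' : Fin n → Finset ℤ) (X : ℝ), 1 ≤ X → (∀ t, ((S t).card : ℝ) ≤ X) →
      (∀ t, ((S' t).card : ℝ) ≤ X) →
      ∑ j ∈ Fintype.piFinset S', ∑ i ∈ Fintype.piFinset S, Kr al A i j ≤ C * X ^ (n : ℝ) := by
  obtain ⟨C, hC, hK⟩ := Kr_le_two hn al hal hlt hsum A hA0
  choose C1 hC1 hB1 using fun k => box_bound hn (al k) (hal k) (hlt k)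
  choose C2 hC2 hB2 using fun k => box_bound hn ((n : ℝ) - al k) (by linarith [hlt k])
    (by linarith [hal k])
  refine ⟨1 + C * ∑ k, C1 k * C2 k, ?_, ?_⟩
  · have : 0 ≤ ∑ k, C1 k * C2 k :=
      Finset.sum_nonneg fun k _ => (mul_pos (hC1 k) (hC2 k)).le
    positivity
  intro S S' X hX hS hS'
  have hX0 : 0 < X := by linarith
  set G : (Fin n → ℤ) → (Fin n → ℤ) → ℝ := fun i j =>
    ∑ k, gw (al k) (i - (A k).mulVec j) * gw ((n : ℝ) - al k) j with hG
  have hGnn : ∀ i j, 0 ≤ G i j := fun i j =>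
    Finset.sum_nonneg fun k _ => mul_nonneg (gw_nonneg _ _) (gw_nonneg _ _)
  have hpt : ∀ i j, Kr al A i j ≤ (if j = 0 then 1 else 0) + C * G i j := by
    intro i j
    by_cases hj : j = 0
    · rw [if_pos hj]
      have := Kr_le_one al hal A i j
      have := mul_nonneg hC.le (hGnn i j)
      linarith
    · rw [if_neg hj, zero_add]
      exact hK i j hj
  have hGs : ∑ j ∈ Fintype.piFinset S', ∑ i ∈ Fintype.piFinset S, G i j ≤
      (∑ k, C1 k * C2 k) * X ^ (n : ℝ) := by
    simp only [hG]
    calc ∑ j ∈ Fintype.piFinset S', ∑ i ∈ Fintype.piFinset S,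
          ∑ k, gw (al k) (i - (A k).mulVec j) * gw ((n : ℝ) - al k) j
        = ∑ k, ∑ j ∈ Fintype.piFinset S',
          (∑ i ∈ Fintype.piFinset S, gw (al k) (i - (A k).mulVec j)) * gw ((n : ℝ) - al k) j := by
          rw [Finset.sum_comm (s := Finset.univ)]
          refine Finset.sum_congr rfl fun j _ => ?_
          rw [Finset.sum_comm]
          simp_rw [Finset.sum_mul]
      _ ≤ ∑ k, ∑ j ∈ Fintype.piFinset S',
          (C1 k * X ^ ((n : ℝ) - al k)) * gw ((n : ℝ) - al k) j := by
          refine Finset.sum_le_sum fun k _ => Finset.sum_le_sum fun j _ => ?_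
          exact mul_le_mul_of_nonneg_right (hB1 k S X hX hS _) (gw_nonneg _ _)
      _ ≤ ∑ k, (C1 k * C2 k) * X ^ (n : ℝ) := by
          refine Finset.sum_le_sum fun k _ => ?_
          rw [← Finset.mul_sum]
          have h1 := hB2 k S' X hX hS' 0
          simp only [sub_zero] at h1
          have h2 : X ^ (n : ℝ) = X ^ ((n : ℝ) - al k) * X ^ ((n : ℝ) - ((n : ℝ) - al k)) := by
            rw [← Real.rpow_add hX0]; congr 1; ring
          have := (hC1 k).le
          calc _ ≤ (C1 k * X ^ ((n : ℝ) - al k)) * (C2 k * X ^ ((n : ℝ) - ((n : ℝ) - al k))) := by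
                gcongr
            _ = _ := by rw [h2]; ring
      _ = _ := by rw [Finset.sum_mul]
  have h0s : ∑ j ∈ Fintype.piFinset S', ∑ i ∈ Fintype.piFinset S, (if j = 0 then (1 : ℝ) else 0) ≤
      X ^ (n : ℝ) := by
    have : ∀ j : Fin n → ℤ, ∑ i ∈ Fintype.piFinset S, (if j = 0 then (1 : ℝ) else 0) =
        if j = 0 then ((Fintype.piFinset S).card : ℝ) else 0 := by
      intro j
      by_cases hj : j = 0 <;> simp [hj]
    simp_rw [this]
    rw [Finset.sum_ite_eq', Real.rpow_natCast]
    split_ifs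
    · exact card_box S X hS
    · positivity
  calc _ ≤ ∑ j ∈ Fintype.piFinset S', ∑ i ∈ Fintype.piFinset S,
        ((if j = 0 then (1 : ℝ) else 0) + C * G i j) :=
        Finset.sum_le_sum fun j _ => Finset.sum_le_sum fun i _ => hpt i j
    _ = ∑ j ∈ Fintype.piFinset S', ∑ i ∈ Fintype.piFinset S, (if j = 0 then (1 : ℝ) else 0)
        + C * ∑ j ∈ Fintype.piFinset S', ∑ i ∈ Fintype.piFinset S, G i j := by
        simp_rw [Finset.sum_add_distrib, Finset.mul_sum]
    _ ≤ X ^ (n : ℝ) + C * ((∑ k, C1 k * C2 k) * X ^ (n : ℝ)) := by gcongr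
    _ = _ := by ring

lemma rpow_le_one_add (y q : ℝ) (hy : 0 ≤ y) (hq0 : 0 < q) (hq : q ≤ 1) : y ^ q ≤ 1 + y := by
  rcases le_total y 1 with h | h
  · have := Real.rpow_le_one hy h hq0.le
    linarith
  · have := Real.rpow_le_rpow_of_exponent_le h hq
    rw [Real.rpow_one] at this
    linarith

lemma main_real (n : ℕ) (hn : 1 ≤ n) (α : ℝ) (hα0 : 0 ≤ α) (hαn : α < n)
    (m : ℕ) (hm : 1 - α / n < m)
    (al : Fin m → ℝ) (hal : ∀ k, 0 < al k) (hsum : ∑ k, al k = n - α)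
    (A : Fin m → Matrix (Fin n) (Fin n) ℤ)
    (hA0 : α = 0 → ∀ k l, k ≠ l → (A k - A l).det ≠ 0)
    (q : ℝ) (hq0 : 0 < q) (hq1 : α = 0 → q ≤ 1) :
    ∃ C : ℝ, 0 < C ∧ ∀ (S S' : Fin n → Finset ℤ) (X : ℝ), 1 ≤ X → (∀ t, ((S t).card : ℝ) ≤ X) →
      (∀ t, ((S' t).card : ℝ) ≤ X) →
      ∑ j ∈ Fintype.piFinset S', (∑ i ∈ Fintype.piFinset S, Kr al A i j) ^ q
        ≤ C * X ^ ((n : ℝ) + α * q) := by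
  rcases hα0.eq_or_lt with h0 | hpos
  · subst h0
    simp only [sub_zero] at hsum
    have hm1 : 1 < m := by simp at hm; exact hm
    have hlt : ∀ k, al k < n := by
      intro k
      obtain ⟨l, hl⟩ : ∃ l, l ≠ k := by
        haveI : Nontrivial (Fin m) := Fin.nontrivial_iff_two_le.2 hm1
        exact exists_ne k
      rw [← hsum]
      exact Finset.single_lt_sum hl (Finset.mem_univ k) (Finset.mem_univ l) (hal l)
        (fun k _ _ => (hal k).le)
    obtain ⟨C, hC, hd⟩ := dbl hn al hal hlt hsum A (hA0 rfl)
    refine ⟨1 + C, by positivity, ?_⟩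
    intro S S' X hX hS hS'
    rw [zero_mul, add_zero]
    calc _ ≤ ∑ j ∈ Fintype.piFinset S', (1 + ∑ i ∈ Fintype.piFinset S, Kr al A i j) :=
          Finset.sum_le_sum fun j _ => rpow_le_one_add _ _
            (Finset.sum_nonneg fun i _ => Kr_nonneg _ _ _ _) hq0 (hq1 rfl)
      _ = ((Fintype.piFinset S').card : ℝ)
          + ∑ j ∈ Fintype.piFinset S', ∑ i ∈ Fintype.piFinset S, Kr al A i j := by
          rw [Finset.sum_add_distrib]; simp
      _ ≤ X ^ (n : ℝ) + C * X ^ (n : ℝ) := by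
          refine add_le_add ?_ (hd S S' X hX hS hS')
          rw [Real.rpow_natCast]
          exact card_box S' X hS'
      _ = _ := by ring
  · obtain ⟨C, hC, hB⟩ := box_bound hn ((n : ℝ) - α) (by linarith) (by linarith)
    refine ⟨1 + ((m : ℝ) * C) ^ q, by positivity, ?_⟩
    intro S S' X hX hS hS'
    have hX0 : 0 < X := by linarith
    have h1 : ∀ j, ∑ i ∈ Fintype.piFinset S, Kr al A i j ≤ (m : ℝ) * C * X ^ α := by
      intro j
      calc _ ≤ ∑ i ∈ Fintype.piFinset S, ∑ k, gw ((n : ℝ) - α) (i - (A k).mulVec j) :=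
            Finset.sum_le_sum fun i _ => Kr_le_sum hn al hal _ (by linarith) hsum A i j
        _ = ∑ k, ∑ i ∈ Fintype.piFinset S, gw ((n : ℝ) - α) (i - (A k).mulVec j) :=
            Finset.sum_comm
        _ ≤ ∑ k : Fin m, C * X ^ ((n : ℝ) - ((n : ℝ) - α)) :=
            Finset.sum_le_sum fun k _ => hB S X hX hS _
        _ = _ := by simp; ring
    calc _ ≤ ∑ j ∈ Fintype.piFinset S', ((m : ℝ) * C * X ^ α) ^ q :=
          Finset.sum_le_sum fun j _ => Real.rpow_le_rpow
            (Finset.sum_nonneg fun i _ => Kr_nonneg _ _ _ _) (h1 j) hq0.le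
      _ = ((Fintype.piFinset S').card : ℝ) * (((m : ℝ) * C) ^ q * X ^ (α * q)) := by
          rw [Finset.sum_const, nsmul_eq_mul, Real.mul_rpow (by positivity) (by positivity),
            ← Real.rpow_mul hX0.le]
      _ ≤ X ^ (n : ℝ) * (((m : ℝ) * C) ^ q * X ^ (α * q)) := by
          gcongr
          rw [Real.rpow_natCast]
          exact card_box S' X hS'
      _ = ((m : ℝ) * C) ^ q * X ^ ((n : ℝ) + α * q) := by
          rw [Real.rpow_add hX0]; ring
      _ ≤ _ := by
          gcongr
          linarith

lemma Tfs_le {n m : ℕ} (al : Fin m → ℝ) (A : Fin m → Matrix (Fin n) (Fin n) ℤ)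
    (a : (Fin n → ℤ) → ℝ) (w : ℝ) (hw : 0 ≤ w) (Q : Finset (Fin n → ℤ))
    (ha : ∀ i, i ∉ Q → a i = 0) (haw : ∀ i, |a i| ≤ w) (j : Fin n → ℤ) :
    Tfs al A a j ≤ ENNReal.ofReal (w * ∑ i ∈ Q, Kr al A i j) := by
  unfold Tfs
  rw [tsum_eq_sum (s := Q) (fun i hi => by simp [ha i hi]), Finset.mul_sum,
    ENNReal.ofReal_sum_of_nonneg (fun i _ => mul_nonneg hw (Kr_nonneg _ _ _ _))]
  refine Finset.sum_le_sum fun i _ => ?_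
  split_ifs with h
  · apply ENNReal.ofReal_le_ofReal
    unfold Kr
    rw [if_pos h, ← div_eq_mul_one_div]
    have : 0 ≤ ∏ k, eucZ (i - (A k).mulVec j) ^ (al k) :=
      Finset.prod_nonneg fun k _ => Real.rpow_nonneg (eucZ_nonneg _) _
    exact div_le_div_of_nonneg_right (haw i) this
  · exact zero_le

lemma card_Icc_real (c r : ℝ) (hr : 0 ≤ r) :
    ((Finset.Icc ⌈c - r⌉ ⌊c + r⌋).card : ℝ) ≤ 2 * r + 1 := by
  rw [Int.card_Icc]
  have h1 := Int.le_ceil (c - r)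
  have h2 := Int.floor_le (c + r)
  rcases le_total 0 (⌊c + r⌋ + 1 - ⌈c - r⌉) with h | h
  · have : (((⌊c + r⌋ + 1 - ⌈c - r⌉).toNat : ℤ) : ℝ) = ((⌊c + r⌋ + 1 - ⌈c - r⌉ : ℤ) : ℝ) := by
      rw [Int.toNat_of_nonneg h]
    rw [Int.cast_natCast] at this
    rw [this]
    push_cast
    linarith
  · rw [Int.toNat_of_nonpos h]
    push_cast
    linarith

theorem stmt10 (n : ℕ) (hn : 1 ≤ n) (α : ℝ) (hα0 : 0 ≤ α) (hαn : α < n)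
    (m : ℕ) (hm : 1 - α / n < m)
    (al : Fin m → ℝ) (hal : ∀ k, 0 < al k) (hsum : ∑ k, al k = n - α)
    (A : Fin m → Matrix (Fin n) (Fin n) ℤ) (hA : ∀ k, (A k).det ≠ 0)
    (hA0 : α = 0 → ∀ k l, k ≠ l → (A k - A l).det ≠ 0)
    (p : ℝ) (hp0 : 0 < p) (hp1 : p ≤ 1)
    (dp : ℕ) (hdp : dp = ⌊(n : ℝ) * (1 / p - 1)⌋₊)
    (q : ℝ) (hq : 1 / q = 1 / p - α / n)
    (D : ℝ)
    (hD : IsGreatest {r : ℝ | ∃ (k : Fin m) (x : Fin n → ℝ), eucR x = 1 ∧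
        r = eucR ((((A k).map (Int.cast : ℤ → ℝ))⁻¹).mulVec x)} D) :
    ∃ C : ℝ, 0 < C ∧ ∀ (i0 : Fin n → ℤ) (N : ℕ) (a : (Fin n → ℤ) → ℝ),
      IsPAtom p dp a i0 N →
      (∑ k : Fin m, ∑' j : Fin n → ℤ,
          if ∀ t, |(j t : ℝ) -
              (((A k).map (Int.cast : ℤ → ℝ))⁻¹).mulVec (fun s => (i0 s : ℝ)) t| ≤ 4 * D * N then
            (Tfs al A a j) ^ q
          else 0)
        ≤ ENNReal.ofReal C := by
  have hn' : (0 : ℝ) < n := by exact_mod_cast hn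
  have hαn1 : α / n < 1 := by rw [div_lt_one hn']; exact hαn
  have hp1' : 1 ≤ 1 / p := by rw [le_div_iff₀ hp0]; linarith
  have hq0 : 0 < q := by
    have : 0 < 1 / q := by rw [hq]; linarith
    exact one_div_pos.1 this
  have hq1 : α = 0 → q ≤ 1 := by
    intro h
    rw [h, zero_div, sub_zero] at hq
    have : q = p := by simpa using hq
    linarith
  have hD0 : 0 ≤ D := by
    obtain ⟨k, x, -, h⟩ := hD.1
    rw [h]
    exact Real.sqrt_nonneg _
  obtain ⟨C, hC, hmain⟩ := main_real n hn α hα0 hαn m hm al hal hsum A hA0 q hq0 hq1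
  set B : ℝ := 8 * D + 1 with hB
  have hB1 : 1 ≤ B := by linarith
  have hB0 : 0 < B := by linarith
  refine ⟨1 + m * (C * B ^ ((n : ℝ) + α * q)), by positivity, ?_⟩
  rintro i0 N a ⟨hsupp, hbd, -⟩
  have hN0 : (0 : ℝ) ≤ N := Nat.cast_nonneg N
  set Y : ℝ := 2 * (N : ℝ) + 1 with hY
  have hY1 : 1 ≤ Y := by linarith
  have hY0 : 0 < Y := by linarith
  set w : ℝ := (Y ^ n) ^ (-(1 / p)) with hw
  have hw0 : 0 ≤ w := by positivity
  set S : Fin n → Finset ℤ := fun t => Finset.Icc (i0 t - N) (i0 t + N) with hS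
  have hBY : Y ≤ B * Y := by nlinarith
  have hScard : ∀ t, ((S t).card : ℝ) ≤ B * Y := by
    intro t
    have : ((S t).card : ℝ) = Y := by
      simp only [hS, Int.card_Icc]
      have : (i0 t + N + 1 - (i0 t - N) : ℤ).toNat = 2 * N + 1 := by omega
      rw [this, hY]
      push_cast
      ring
    rw [this]
    exact hBY
  have haQ : ∀ i, i ∉ Fintype.piFinset S → a i = 0 := by
    intro i hi
    by_contra h
    apply hi
    rw [Fintype.mem_piFinset]
    intro t
    have := abs_le.1 (hsupp i h t)
    simp only [hS, Finset.mem_Icc]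
    constructor <;> linarith [this.1, this.2]
  have hT := Tfs_le al A a w hw0 (Fintype.piFinset S) haQ hbd
  have hexp : w ^ q * (B * Y) ^ ((n : ℝ) + α * q) = B ^ ((n : ℝ) + α * q) := by
    rw [hw, ← Real.rpow_natCast, ← Real.rpow_mul hY0.le, ← Real.rpow_mul hY0.le,
      Real.mul_rpow hB0.le hY0.le, mul_left_comm, ← Real.rpow_add hY0]
    have : (n : ℝ) * -(1 / p) * q + (n + α * q) = 0 := by
      have h1 : 1 / p = 1 / q + α / n := by linarith
      rw [h1]
      field_simp
      ring
    rw [this, Real.rpow_zero, mul_one]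
  have hk : ∀ k : Fin m, (∑' j : Fin n → ℤ,
          if ∀ t, |(j t : ℝ) -
              (((A k).map (Int.cast : ℤ → ℝ))⁻¹).mulVec (fun s => (i0 s : ℝ)) t| ≤ 4 * D * N then
            (Tfs al A a j) ^ q
          else 0) ≤ ENNReal.ofReal (C * B ^ ((n : ℝ) + α * q)) := by
    intro k
    set c := (((A k).map (Int.cast : ℤ → ℝ))⁻¹).mulVec (fun s => (i0 s : ℝ)) with hc
    set S' : Fin n → Finset ℤ := fun t => Finset.Icc ⌈c t - 4 * D * N⌉ ⌊c t + 4 * D * N⌋ with hS'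
    have hr0 : 0 ≤ 4 * D * N := by positivity
    have hS'card : ∀ t, ((S' t).card : ℝ) ≤ B * Y := by
      intro t
      refine (card_Icc_real (c t) _ hr0).trans ?_
      rw [hB, hY]
      nlinarith [mul_nonneg hD0 hN0]
    rw [tsum_eq_sum (s := Fintype.piFinset S')]
    · calc _ ≤ ∑ j ∈ Fintype.piFinset S',
            ENNReal.ofReal (w ^ q * (∑ i ∈ Fintype.piFinset S, Kr al A i j) ^ q) := by
            refine Finset.sum_le_sum fun j _ => ?_
            split_ifs
            · have hnn : 0 ≤ ∑ i ∈ Fintype.piFinset S, Kr al A i j :=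
                Finset.sum_nonneg fun i _ => Kr_nonneg _ _ _ _
              rw [← Real.mul_rpow hw0 hnn, ← ENNReal.ofReal_rpow_of_nonneg (mul_nonneg hw0 hnn) hq0.le]
              exact ENNReal.rpow_le_rpow (hT j) hq0.le
            · exact zero_le
        _ = ENNReal.ofReal (w ^ q * ∑ j ∈ Fintype.piFinset S',
              (∑ i ∈ Fintype.piFinset S, Kr al A i j) ^ q) := by
            rw [Finset.mul_sum, ENNReal.ofReal_sum_of_nonneg]
            intro j _
            exact mul_nonneg (by positivity) (Real.rpow_nonneg
              (Finset.sum_nonneg fun i _ => Kr_nonneg _ _ _ _) _)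
        _ ≤ _ := by
            apply ENNReal.ofReal_le_ofReal
            calc _ ≤ w ^ q * (C * (B * Y) ^ ((n : ℝ) + α * q)) := by
                  gcongr
                  exact hmain S S' (B * Y) (by linarith) hScard hS'card
              _ = C * (w ^ q * (B * Y) ^ ((n : ℝ) + α * q)) := by ring
              _ = _ := by rw [hexp]
    · intro j hj
      rw [if_neg]
      intro h
      apply hj
      rw [Fintype.mem_piFinset]
      intro t
      have := abs_le.1 (h t)
      simp only [hS', Finset.mem_Icc, Int.ceil_le, Int.le_floor]
      constructor <;> linarith [this.1, this.2]
  calc _ ≤ ∑ k : Fin m, ENNReal.ofReal (C * B ^ ((n : ℝ) + α * q)) :=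
        Finset.sum_le_sum fun k _ => hk k
    _ = ENNReal.ofReal (∑ k : Fin m, C * B ^ ((n : ℝ) + α * q)) := by
        rw [ENNReal.ofReal_sum_of_nonneg]
        intro _ _
        positivity
    _ ≤ _ := by
        apply ENNReal.ofReal_le_ofReal
        rw [Finset.sum_const, Finset.card_univ, Fintype.card_fin, nsmul_eq_mul]
        linarith
end

section
/- Let 0 ≤ α < n, 0 < p ≤ 1, d_p = ⌊n(1/p − 1)⌋, and 1/q = 1/p − α/n. Then there exists a constant C > 0 such that for every discrete cube Q = {i ∈ ℤ^n : |i − i_0|_∞ ≤ N}, one has Σ_{j ∈ ℤ^n} ( M_{αn/(n+d_p+1)}(χ_Q)(j) )^{q(n+d_p+1)/n} ≤ C (#Q)^{q/p}, where χ_Q is the characteristic sequence of Q and #Q = (2N+1)^n. -/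
open scoped ENNReal BigOperators Classical

lemma aux_tsum_pi (f : ℤ → ℝ≥0∞) (n : ℕ) :
    ∑' j : Fin n → ℤ, ∏ k, f (j k) = (∑' m, f m) ^ n := by
  induction n with
  | zero => simp
  | succ n ih =>
    rw [← (Fin.consEquiv (fun _ : Fin (n + 1) => ℤ)).tsum_eq, ENNReal.tsum_prod']
    simp only [Fin.consEquiv_apply, Fin.prod_univ_succ, Fin.cons_zero, Fin.cons_succ]
    simp only [ENNReal.tsum_mul_left, ih, ENNReal.tsum_mul_right]
    rw [pow_succ']

lemma aux_summable (t : ℝ) (ht : 1 < t) : Summable (fun a : ℤ => (1 + |(a : ℝ)|) ^ (-t)) := by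
  have h1 := Real.summable_abs_int_rpow ht
  have h2 : Summable (fun a : ℤ => |(a : ℝ)| ^ (-t) + if a = 0 then (1 : ℝ) else 0) := by
    refine h1.add ?_
    exact summable_of_finite_support ((Set.finite_singleton (0 : ℤ)).subset (by
      intro a ha
      by_contra h
      simp at h
      simp [h] at ha))
  refine Summable.of_nonneg_of_le (fun a => by positivity) (fun a => ?_) h2
  by_cases ha : a = 0
  · subst ha
    simp
    positivity
  · simp only [ha, if_false, add_zero]
    apply Real.rpow_le_rpow_of_nonpos
    · positivity
    · linarith
    · linarith

lemma aux_one_dim (t : ℝ) (ht : 1 < t) : ∃ C : ℝ, 0 < C ∧ ∀ N : ℕ,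
    ∑' m : ℤ, ENNReal.ofReal (((2 * (N : ℝ) + 1) + 2 * |(m : ℝ)|) ^ (-t))
      ≤ ENNReal.ofReal (C * (2 * (N : ℝ) + 1) ^ (1 - t)) := by
  have hs := aux_summable t ht
  have hS0 : 0 ≤ ∑' a : ℤ, (1 + |(a : ℝ)|) ^ (-t) := tsum_nonneg (fun a => by positivity)
  refine ⟨2 ^ t * (∑' a : ℤ, (1 + |(a : ℝ)|) ^ (-t) + 1), by positivity, fun N => ?_⟩
  set L : ℝ := 2 * (N : ℝ) + 1 with hL
  have hLpos : 0 < L := by positivity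
  haveI : NeZero (2 * N + 1) := ⟨by omega⟩
  rw [← (Int.divModEquiv (2 * N + 1)).symm.tsum_eq, ENNReal.tsum_prod']
  have key : ∀ (a : ℤ) (b : Fin (2 * N + 1)),
      ENNReal.ofReal ((L + 2 * |(((Int.divModEquiv (2 * N + 1)).symm (a, b) : ℤ) : ℝ)|) ^ (-t))
      ≤ ENNReal.ofReal (2 ^ t * L ^ (-t) * (1 + |(a : ℝ)|) ^ (-t)) := by
    intro a b
    apply ENNReal.ofReal_le_ofReal
    have hb : ((b : ℕ) : ℝ) ≤ L := by
      rw [hL]; exact_mod_cast b.2.le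
    have hb0 : (0 : ℝ) ≤ ((b : ℕ) : ℝ) := by positivity
    have e1 : (((Int.divModEquiv (2 * N + 1)).symm (a, b) : ℤ) : ℝ) = a * L + (b : ℕ) := by
      simp [Int.divModEquiv, hL]
    rw [e1]
    have h1 : L * |(a : ℝ)| ≤ |a * L + ((b : ℕ) : ℝ)| + L := by
      have : L * |(a : ℝ)| = |(a * L + ((b : ℕ) : ℝ)) - ((b : ℕ) : ℝ)| := by
        rw [add_sub_cancel_right, abs_mul, abs_of_pos hLpos, mul_comm]
      rw [this]
      refine (abs_sub _ _).trans ?_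
      rw [abs_of_nonneg hb0]
      linarith
    have h2 : 2⁻¹ * (L * (1 + |(a : ℝ)|)) ≤ L + 2 * |a * L + ((b : ℕ) : ℝ)| := by
      have := abs_nonneg (a * L + ((b : ℕ) : ℝ))
      nlinarith
    refine (Real.rpow_le_rpow_of_nonpos (by positivity) h2 (by linarith)).trans (le_of_eq ?_)
    rw [Real.mul_rpow (by positivity) (by positivity), Real.mul_rpow (by positivity) (by positivity),
      Real.inv_rpow (by positivity), Real.rpow_neg (by positivity), inv_inv, mul_assoc]
  refine (ENNReal.tsum_le_tsum (fun a => ENNReal.tsum_le_tsum (fun b => key a b))).trans ?_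
  simp only [tsum_fintype, Finset.sum_const, Finset.card_univ, Fintype.card_fin, nsmul_eq_mul]
  rw [ENNReal.tsum_mul_left, ← ENNReal.ofReal_tsum_of_nonneg (fun a => by positivity)
    (hs.mul_left _), tsum_mul_left, ← ENNReal.ofReal_natCast, ← ENNReal.ofReal_mul (by positivity)]
  apply ENNReal.ofReal_le_ofReal
  have e2 : L ^ (1 - t) = L * L ^ (-t) := by
    rw [sub_eq_add_neg, Real.rpow_add hLpos, Real.rpow_one]
  have e3 : ((2 * N + 1 : ℕ) : ℝ) = L := by rw [hL]; push_cast; rfl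
  rw [e2, e3]
  have : 0 ≤ 2 ^ t * (L * L ^ (-t)) := by positivity
  nlinarith

lemma aux_count (n : ℕ) (i0 j : Fin n → ℤ) (N K : ℕ) :
    (∑ i ∈ Finset.Icc (fun k => j k - (K : ℤ)) (fun k => j k + (K : ℤ)),
      |if ∀ t, |i t - i0 t| ≤ (N : ℤ) then (1 : ℝ) else 0|) ≤ (2 * (K : ℝ) + 1) ^ n ∧
    (∑ i ∈ Finset.Icc (fun k => j k - (K : ℤ)) (fun k => j k + (K : ℤ)),
      |if ∀ t, |i t - i0 t| ≤ (N : ℤ) then (1 : ℝ) else 0|) ≤ (2 * (N : ℝ) + 1) ^ n := by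
  have hc : ∀ (x : Fin n → ℤ) (R : ℕ),
      ((Finset.Icc (fun k => x k - (R : ℤ)) (fun k => x k + (R : ℤ))).card : ℝ)
        = (2 * (R : ℝ) + 1) ^ n := by
    intro x R
    rw [Pi.card_Icc]
    simp only [Int.card_Icc]
    have : ∀ k, (x k + (R : ℤ) + 1 - (x k - (R : ℤ))).toNat = 2 * R + 1 := by
      intro k; omega
    simp [this]
  have e : (∑ i ∈ Finset.Icc (fun k => j k - (K : ℤ)) (fun k => j k + (K : ℤ)),
      |if ∀ t, |i t - i0 t| ≤ (N : ℤ) then (1 : ℝ) else 0|)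
      = (((Finset.Icc (fun k => j k - (K : ℤ)) (fun k => j k + (K : ℤ))).filter
        (fun i => ∀ t, |i t - i0 t| ≤ (N : ℤ))).card : ℝ) := by
    rw [Finset.card_filter]
    push_cast
    apply Finset.sum_congr rfl
    intro i _
    split_ifs <;> simp
  rw [e]
  constructor
  · rw [← hc j K]
    exact_mod_cast Finset.card_filter_le _ _
  · rw [← hc i0 N]
    norm_cast
    apply Finset.card_le_card
    intro i hi
    rw [Finset.mem_filter] at hi
    rw [Finset.mem_Icc]
    constructor <;> intro t <;> have := abs_le.1 (hi.2 t) <;> simp only <;> omega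

lemma aux_Mfr (n : ℕ) (hn : 1 ≤ n) (γ : ℝ) (hγ0 : 0 ≤ γ) (hγ : γ < n) (i0 j : Fin n → ℤ) (N : ℕ) :
    Mfr γ (fun i => if ∀ t, |i t - i0 t| ≤ (N : ℤ) then (1 : ℝ) else 0) j ≤
      ENNReal.ofReal ((2 * (N : ℝ) + 1) ^ n * 3 ^ (n - γ) *
        ∏ k, ((2 * (N : ℝ) + 1) + 2 * |(((j - i0) k : ℤ) : ℝ)|) ^ (-((n - γ) / n))) := by
  unfold Mfr
  refine iSup_le fun K => ENNReal.ofReal_le_ofReal ?_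
  obtain ⟨c1, c2⟩ := aux_count n i0 j N K
  have hn0 : (0 : ℝ) < n := by exact_mod_cast hn
  set S := ∑ i ∈ Finset.Icc (fun k => j k - (K : ℤ)) (fun k => j k + (K : ℤ)),
      |if ∀ t, |i t - i0 t| ≤ (N : ℤ) then (1 : ℝ) else 0| with hS
  have hS0 : 0 ≤ S := Finset.sum_nonneg (fun _ _ => abs_nonneg _)
  by_cases hz : S = 0
  · rw [hz, mul_zero]
    positivity
  obtain ⟨i, hi, hi2⟩ := Finset.exists_ne_zero_of_sum_ne_zero hz
  have hiQ : ∀ t, |i t - i0 t| ≤ (N : ℤ) := by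
    by_contra h
    simp [h] at hi2
  rw [Finset.mem_Icc] at hi
  set W : ℝ := max (2 * (K : ℝ) + 1) (2 * (N : ℝ) + 1) with hW
  have hWpos : 0 < W := lt_of_lt_of_le (by positivity) (le_max_left _ _)
  have hx : ∀ k, ((2 * (N : ℝ) + 1) + 2 * |(((j - i0) k : ℤ) : ℝ)|) ≤ 3 * W := by
    intro k
    have h1 : |(j - i0) k| ≤ (K : ℤ) + N := by
      have a1 := hi.1 k
      have a2 := hi.2 k
      have a3 := abs_le.1 (hiQ k)
      simp only [Pi.sub_apply] at *
      rw [abs_le]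
      constructor <;> omega
    have h2 : |(((j - i0) k : ℤ) : ℝ)| ≤ K + N := by exact_mod_cast h1
    have := le_max_left (2 * (K : ℝ) + 1) (2 * (N : ℝ) + 1)
    have := le_max_right (2 * (K : ℝ) + 1) (2 * (N : ℝ) + 1)
    linarith
  have hT : (2 * (K : ℝ) + 1) ^ (γ - n) * S ≤ (2 * (N : ℝ) + 1) ^ n * W ^ (γ - n) := by
    rcases le_total N K with h | h
    · have : W = 2 * (K : ℝ) + 1 := by
        rw [hW, max_eq_left]
        have : (N : ℝ) ≤ K := by exact_mod_cast h
        linarith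
      rw [this, mul_comm]
      gcongr
    · have hKN : (K : ℝ) ≤ N := by exact_mod_cast h
      have : W = 2 * (N : ℝ) + 1 := by
        rw [hW, max_eq_right]
        linarith
      rw [this]
      calc (2 * (K : ℝ) + 1) ^ (γ - n) * S
          ≤ (2 * (K : ℝ) + 1) ^ (γ - n) * (2 * (K : ℝ) + 1) ^ n := by gcongr
        _ = (2 * (K : ℝ) + 1) ^ γ := by
            rw [← Real.rpow_natCast, ← Real.rpow_add (by positivity)]; congr 1; ring
        _ ≤ (2 * (N : ℝ) + 1) ^ γ := by gcongr
        _ = _ := by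
            rw [← Real.rpow_natCast, ← Real.rpow_add (by positivity)]; congr 1; ring
  refine hT.trans ?_
  rw [mul_assoc]
  gcongr
  have hP : (3 * W) ^ (γ - n) ≤
      ∏ k, ((2 * (N : ℝ) + 1) + 2 * |(((j - i0) k : ℤ) : ℝ)|) ^ (-((n - γ) / n)) := by
    have : (3 * W) ^ (γ - n) = ∏ k : Fin n, (3 * W) ^ (-((n - γ) / n)) := by
      rw [Finset.prod_const, Finset.card_univ, Fintype.card_fin, ← Real.rpow_mul_natCast (by positivity)]
      congr 1
      field_simp
      ring
    rw [this]
    refine Finset.prod_le_prod (fun k _ => by positivity) (fun k _ => ?_)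
    refine Real.rpow_le_rpow_of_nonpos (by positivity) (hx k) ?_
    have : 0 ≤ (n - γ) / n := div_nonneg (by linarith) hn0.le
    linarith
  calc W ^ (γ - n) = 3 ^ (n - γ) * (3 * W) ^ (γ - n) := by
        rw [Real.mul_rpow (by positivity) (by positivity), ← mul_assoc,
          ← Real.rpow_add (by positivity)]
        simp
    _ ≤ _ := by gcongr

theorem stmt12 (n : ℕ) (hn : 1 ≤ n) (α : ℝ) (hα0 : 0 ≤ α) (hαn : α < n)
    (p : ℝ) (hp0 : 0 < p) (hp1 : p ≤ 1)
    (dp : ℕ) (hdp : dp = ⌊(n : ℝ) * (1 / p - 1)⌋₊)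
    (q : ℝ) (hq : 1 / q = 1 / p - α / n) :
    ∃ C : ℝ, 0 < C ∧ ∀ (i0 : Fin n → ℤ) (N : ℕ),
      (∑' j : Fin n → ℤ,
          (Mfr (α * n / ((n : ℝ) + dp + 1))
              (fun i => if ∀ t, |i t - i0 t| ≤ (N : ℤ) then (1 : ℝ) else 0) j)
            ^ (q * ((n : ℝ) + dp + 1) / n))
        ≤ ENNReal.ofReal (C * (((2 * (N : ℝ) + 1) ^ n) ^ (q / p))) := by
  have hn0 : (0 : ℝ) < n := by exact_mod_cast hn
  set D : ℝ := (n : ℝ) + dp + 1 with hD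
  have hDpos : 0 < D := by positivity
  have hDn : (n : ℝ) < D := by rw [hD]; have : (0 : ℝ) ≤ dp := by positivity
                               linarith
  have hqinv : 0 < 1 / q := by
    rw [hq]
    have h1 : 1 ≤ 1 / p := by rw [le_div_iff₀ hp0]; linarith
    have h2 : α / n < 1 := by rw [div_lt_one hn0]; exact hαn
    linarith
  have hq0 : 0 < q := one_div_pos.1 hqinv
  have hfl : (n : ℝ) / p < D := by
    have := Nat.lt_floor_add_one ((n : ℝ) * (1 / p - 1))
    rw [← hdp] at this
    have e : (n : ℝ) / p = n * (1 / p - 1) + n := by ring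
    rw [e, hD]; linarith
  have hqp : n * (q / p) = n + q * α := by
    field_simp at hq ⊢
    linarith
  set γ : ℝ := α * n / D with hγd
  have hγ0 : 0 ≤ γ := by positivity
  have hγn : γ < n := by
    rw [hγd, div_lt_iff₀ hDpos]; nlinarith
  set s : ℝ := q * D / n with hs
  have hs0 : 0 < s := by positivity
  have hgs : (n - γ) * s = q * (D - α) := by
    rw [hγd, hs]; field_simp
  set t : ℝ := (n - γ) / n * s with ht
  have htn : t * n = q * (D - α) := by rw [← hgs, ht]; field_simp
  have ht1 : 1 < t := by
    have h1 : q * (n / p) < q * D := by gcongr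
    have h2 : q * (n / p) = n * (q / p) := by ring
    nlinarith
  obtain ⟨C, hC, hb⟩ := aux_one_dim t ht1
  refine ⟨(3 ^ (n - γ)) ^ s * C ^ n, by positivity, fun i0 N => ?_⟩
  set L : ℝ := 2 * (N : ℝ) + 1 with hL
  have hLpos : 0 < L := by positivity
  have key : ∀ j : Fin n → ℤ,
      (Mfr γ (fun i => if ∀ t, |i t - i0 t| ≤ (N : ℤ) then (1 : ℝ) else 0) j) ^ s ≤
      ENNReal.ofReal ((L ^ n * 3 ^ (n - γ)) ^ s) *
        ∏ k, ENNReal.ofReal ((L + 2 * |(((j - i0) k : ℤ) : ℝ)|) ^ (-t)) := by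
    intro j
    refine (ENNReal.rpow_le_rpow (aux_Mfr n hn γ hγ0 hγn i0 j N) hs0.le).trans (le_of_eq ?_)
    rw [ENNReal.ofReal_rpow_of_nonneg (by positivity) hs0.le,
      Real.mul_rpow (by positivity) (by positivity), ENNReal.ofReal_mul (by positivity),
      ← Real.finsetProd_rpow _ _ (fun k _ => by positivity),
      ENNReal.ofReal_prod_of_nonneg (fun k _ => by positivity)]
    congr 1
    refine Finset.prod_congr rfl (fun k _ => ?_)
    rw [← Real.rpow_mul (by positivity), ht, neg_mul]
  refine (ENNReal.tsum_le_tsum key).trans ?_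
  rw [ENNReal.tsum_mul_left]
  have e1 := (Equiv.subRight i0).tsum_eq
    (fun j : Fin n → ℤ => ∏ k, ENNReal.ofReal ((L + 2 * |((j k : ℤ) : ℝ)|) ^ (-t)))
  simp only [Equiv.subRight_apply] at e1
  rw [e1, aux_tsum_pi (fun m => ENNReal.ofReal ((L + 2 * |(m : ℝ)|) ^ (-t))) n]
  refine (mul_le_mul_right (pow_le_pow_left' (hb N) n) _).trans ?_
  rw [← ENNReal.ofReal_pow (by positivity), ← ENNReal.ofReal_mul (by positivity)]
  apply ENNReal.ofReal_le_ofReal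
  apply le_of_eq
  rw [Real.mul_rpow (by positivity) (by positivity), mul_pow]
  have e2 : (L ^ n) ^ s * (L ^ (1 - t)) ^ n = (L ^ n) ^ (q / p) := by
    rw [← Real.rpow_natCast, ← Real.rpow_natCast, ← Real.rpow_mul hLpos.le,
      ← Real.rpow_mul hLpos.le, ← Real.rpow_mul hLpos.le, ← Real.rpow_add hLpos, hqp]
    congr 1
    have : n * s = q * D := by rw [hs]; field_simp
    rw [this, sub_mul, htn]; ring
  rw [← e2]; ring
end

section
/- Let 0 ≤ α < n and m ∈ ℕ with m > 1 − α/n, and let T_{α,m} be the discrete fractional series operator. If n/(n−α) < q < ∞ and 0 < p ≤ nq/(n + αq), then there exists a constant C > 0 such that ‖T_{α,m} b‖_{ℓ^q(ℤ^n)} ≤ C ‖b‖_{ℓ^p(ℤ^n)} for all b ∈ ℓ^p(ℤ^n). -/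
open scoped ENNReal BigOperators Classical

lemma fsum_cover {ι : Type*} (S s t : Finset ι) (f : ι → ℝ) (hf : ∀ i, 0 ≤ f i)
    (h : ∀ x ∈ S, x ∈ s ∨ x ∈ t) :
    ∑ i ∈ S, f i ≤ ∑ i ∈ s, f i + ∑ i ∈ t, f i := by
  have h1 : ∑ i ∈ S, f i ≤ ∑ i ∈ s ∪ t, f i :=
    Finset.sum_le_sum_of_subset_of_nonneg (fun x hx => Finset.mem_union.2 (h x hx)) (fun i _ _ => hf i)
  have h2 := Finset.sum_union_inter (s₁ := s) (s₂ := t) (f := f)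
  have := Finset.sum_nonneg (s := s ∩ t) (f := f) (fun i _ => hf i)
  linarith

/-! ### Counting lattice points in sup-norm balls -/

lemma cnt_ball {n : ℕ} (S : Finset (Fin n → ℤ)) (R : ℝ) (hR : 1 ≤ R) :
    ((S.filter (fun x => ‖x‖ ≤ R)).card : ℝ) ≤ (3 * R) ^ (n : ℝ) := by
  have hsub : S.filter (fun x => ‖x‖ ≤ R) ⊆
      Fintype.piFinset (fun _ : Fin n => Finset.Icc (-⌊R⌋) ⌊R⌋) := by
    intro x hx
    rw [Finset.mem_filter] at hx
    rw [Fintype.mem_piFinset]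
    intro t
    have h1 : ‖x t‖ ≤ R := (norm_le_pi_norm x t).trans hx.2
    rw [Int.norm_eq_abs] at h1
    have h2 : |x t| ≤ ⌊R⌋ := by
      apply Int.le_floor.2
      push_cast
      exact h1
    rw [Finset.mem_Icc]
    exact abs_le.1 h2
  have hc := Finset.card_le_card hsub
  rw [Fintype.card_piFinset] at hc
  simp only [Int.card_Icc, Finset.prod_const, Finset.card_univ, Fintype.card_fin] at hc
  have hf : (0 : ℤ) ≤ ⌊R⌋ := Int.floor_nonneg.2 (by linarith)
  have h3 : (((⌊R⌋ + 1 - -⌊R⌋).toNat : ℕ) : ℝ) ≤ 3 * R := by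
    have : (((⌊R⌋ + 1 - -⌊R⌋).toNat : ℕ) : ℝ) = ((⌊R⌋ + 1 - -⌊R⌋ : ℤ) : ℝ) := by
      have := Int.toNat_of_nonneg (show 0 ≤ ⌊R⌋ + 1 - -⌊R⌋ by linarith)
      exact_mod_cast this
    rw [this]
    push_cast
    have := Int.floor_le R
    linarith
  rw [Real.rpow_natCast]
  calc ((S.filter (fun x => ‖x‖ ≤ R)).card : ℝ)
      ≤ (((⌊R⌋ + 1 - -⌊R⌋).toNat ^ n : ℕ) : ℝ) := by exact_mod_cast hc
    _ = (((⌊R⌋ + 1 - -⌊R⌋).toNat : ℕ) : ℝ) ^ n := by push_cast; rfl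
    _ ≤ (3 * R) ^ n := by gcongr

lemma one_le_norm_int {n : ℕ} (x : Fin n → ℤ) (hx : x ≠ 0) : 1 ≤ ‖x‖ := by
  obtain ⟨t, ht⟩ := Function.ne_iff.1 hx
  have h1 : ‖x t‖ ≤ ‖x‖ := norm_le_pi_norm x t
  rw [Int.norm_eq_abs] at h1
  have : (1 : ℤ) ≤ |x t| := Int.one_le_abs ht
  have h2 : (1 : ℝ) ≤ |(x t : ℝ)| := by exact_mod_cast this
  linarith

/-- Sums over balls. -/
lemma sum_near {n : ℕ} (a : ℝ) (ha : 0 < a) (han : a < n) :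
    ∃ C : ℝ, 0 < C ∧ ∀ (S : Finset (Fin n → ℤ)) (R : ℝ), 0 < R →
      ∑ x ∈ S.filter (fun x => ‖x‖ ≤ R), ‖x‖ ^ (-a) ≤ C * R ^ ((n : ℝ) - a) := by
  set B : ℝ := 3 ^ (n : ℝ) * 2 ^ a with hB
  have hBpos : 0 < B := by positivity
  set r : ℝ := 2 ^ (-((n : ℝ) - a)) with hr
  have hr1 : r < 1 := Real.rpow_lt_one_of_one_lt_of_neg (by norm_num) (by linarith)
  have hrpos : 0 < r := by positivity
  refine ⟨B / (1 - r), div_pos hBpos (by linarith), ?_⟩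
  set C := B / (1 - r) with hC
  have hCeq : C * r + B = C := by
    have : (1 - r) ≠ 0 := by linarith
    rw [hC]; field_simp; ring
  have hCpos : 0 < C := div_pos hBpos (by linarith)
  have key : ∀ M : ℕ, ∀ (S : Finset (Fin n → ℤ)) (R : ℝ), 0 < R → R < 2 ^ M →
      ∑ x ∈ S.filter (fun x => ‖x‖ ≤ R), ‖x‖ ^ (-a) ≤ C * R ^ ((n : ℝ) - a) := by
    intro M
    have small : ∀ (S : Finset (Fin n → ℤ)) (R : ℝ), 0 < R → R < 1 →
      ∑ x ∈ S.filter (fun x => ‖x‖ ≤ R), ‖x‖ ^ (-a) ≤ C * R ^ ((n : ℝ) - a) := by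
      intro S R hR0 hR
      rw [Finset.sum_eq_zero]
      · positivity
      · intro x hx
        rw [Finset.mem_filter] at hx
        have : x = 0 := by
          by_contra h
          have := one_le_norm_int x h
          linarith [hx.2]
        rw [this, norm_zero, Real.zero_rpow (by linarith)]
    induction M with
    | zero =>
      intro S R hR0 hR
      exact small S R hR0 (by simpa using hR)
    | succ M ih =>
      intro S R hR0 hR
      by_cases h1 : R < 1
      · exact small S R hR0 h1
      push Not at h1
      have hsplit : ∀ x ∈ S.filter (fun x => ‖x‖ ≤ R),
          x ∈ S.filter (fun x => ‖x‖ ≤ R / 2) ∨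
          x ∈ (S.filter (fun x => R / 2 < ‖x‖)).filter (fun x => ‖x‖ ≤ R) := by
        intro x hx
        simp only [Finset.mem_filter] at hx ⊢
        rcases le_or_gt ‖x‖ (R/2) with h | h
        · left; exact ⟨hx.1, h⟩
        · right; exact ⟨⟨hx.1, h⟩, hx.2⟩
      have hnn : ∀ x : Fin n → ℤ, 0 ≤ ‖x‖ ^ (-a) := fun x => by positivity
      have e1 := ih S (R / 2) (by linarith) (by rw [pow_succ] at hR; linarith)
      have e2 : ∑ x ∈ (S.filter (fun x => R / 2 < ‖x‖)).filter (fun x => ‖x‖ ≤ R), ‖x‖ ^ (-a)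
          ≤ (3 * R) ^ (n : ℝ) * (R / 2) ^ (-a) := by
        calc _ ≤ ∑ x ∈ (S.filter (fun x => R / 2 < ‖x‖)).filter (fun x => ‖x‖ ≤ R), (R / 2) ^ (-a) := by
              apply Finset.sum_le_sum
              intro x hx
              simp only [Finset.mem_filter] at hx
              exact Real.rpow_le_rpow_of_nonpos (by linarith) hx.1.2.le (by linarith)
          _ ≤ _ := by
              rw [Finset.sum_const, nsmul_eq_mul]
              exact mul_le_mul_of_nonneg_right (cnt_ball _ R h1) (by positivity)
      have e3 : (3 * R) ^ (n : ℝ) * (R / 2) ^ (-a) = B * R ^ ((n : ℝ) - a) := by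
        rw [Real.mul_rpow (by norm_num) hR0.le, Real.div_rpow hR0.le (by norm_num),
          Real.rpow_neg (by norm_num : (0:ℝ) ≤ 2), sub_eq_add_neg, Real.rpow_add hR0, hB]
        field_simp
      have e4 : (R / 2) ^ ((n : ℝ) - a) = r * R ^ ((n : ℝ) - a) := by
        rw [Real.div_rpow hR0.le (by norm_num), hr, Real.rpow_neg (by norm_num : (0:ℝ) ≤ 2)]
        field_simp
      calc _ ≤ _ := fsum_cover _ _ _ _ hnn hsplit
        _ ≤ C * (r * R ^ ((n : ℝ) - a)) + B * R ^ ((n : ℝ) - a) := by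
            rw [← e4, ← e3]; exact add_le_add e1 e2
        _ = (C * r + B) * R ^ ((n : ℝ) - a) := by ring
        _ = _ := by rw [hCeq]
  intro S R hR
  obtain ⟨M, hM⟩ := pow_unbounded_of_one_lt R (by norm_num : (1:ℝ) < 2)
  exact key M S R hR hM

/-- Sums over complements of balls. -/
lemma sum_far {n : ℕ} (β : ℝ) (hβ : (n : ℝ) < β) :
    ∃ C : ℝ, 0 < C ∧ ∀ (S : Finset (Fin n → ℤ)) (R : ℝ), 1 ≤ R →
      ∑ x ∈ S.filter (fun x => R < ‖x‖), ‖x‖ ^ (-β) ≤ C * R ^ ((n : ℝ) - β) := by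
  set B : ℝ := 6 ^ (n : ℝ) with hB
  have hBpos : 0 < B := by positivity
  set r : ℝ := 2 ^ ((n : ℝ) - β) with hr
  have hr1 : r < 1 := Real.rpow_lt_one_of_one_lt_of_neg (by norm_num) (by linarith)
  have hrpos : 0 < r := by positivity
  refine ⟨B / (1 - r), div_pos hBpos (by linarith), ?_⟩
  set C := B / (1 - r) with hC
  have hCeq : C * r + B = C := by
    have : (1 - r) ≠ 0 := by linarith
    rw [hC]; field_simp; ring
  have hCpos : 0 < C := div_pos hBpos (by linarith)
  have hβ0 : 0 < β := lt_of_le_of_lt (Nat.cast_nonneg n) hβ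
  intro S
  obtain ⟨D, hD⟩ : ∃ D : ℝ, ∀ x ∈ S, ‖x‖ ≤ D :=
    ⟨∑ x ∈ S, ‖x‖, fun x hx => Finset.single_le_sum (f := fun x => ‖x‖) (fun y _ => norm_nonneg y) hx⟩
  have key : ∀ M : ℕ, ∀ (R : ℝ), 1 ≤ R → D ≤ 2 ^ M * R →
      ∑ x ∈ S.filter (fun x => R < ‖x‖), ‖x‖ ^ (-β) ≤ C * R ^ ((n : ℝ) - β) := by
    intro M
    induction M with
    | zero =>
      intro R hR hDR
      rw [Finset.sum_eq_zero]
      · positivity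
      · intro x hx
        rw [Finset.mem_filter] at hx
        have := hD x hx.1
        simp at hDR
        linarith [hx.2]
    | succ M ih =>
      intro R hR hDR
      have hR0 : 0 < R := by linarith
      have hsplit : ∀ x ∈ S.filter (fun x => R < ‖x‖),
          x ∈ S.filter (fun x => 2 * R < ‖x‖) ∨
          x ∈ (S.filter (fun x => R < ‖x‖)).filter (fun x => ‖x‖ ≤ 2 * R) := by
        intro x hx
        simp only [Finset.mem_filter] at hx ⊢
        rcases le_or_gt ‖x‖ (2 * R) with h | h
        · right; exact ⟨hx, h⟩
        · left; exact ⟨hx.1, h⟩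
      have hnn : ∀ x : Fin n → ℤ, 0 ≤ ‖x‖ ^ (-β) := fun x => by positivity
      have e1 := ih (2 * R) (by linarith) (by rw [pow_succ] at hDR; linarith)
      have e2 : ∑ x ∈ (S.filter (fun x => R < ‖x‖)).filter (fun x => ‖x‖ ≤ 2 * R), ‖x‖ ^ (-β)
          ≤ (3 * (2 * R)) ^ (n : ℝ) * R ^ (-β) := by
        calc _ ≤ ∑ x ∈ (S.filter (fun x => R < ‖x‖)).filter (fun x => ‖x‖ ≤ 2 * R), R ^ (-β) := by
              apply Finset.sum_le_sum
              intro x hx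
              simp only [Finset.mem_filter] at hx
              exact Real.rpow_le_rpow_of_nonpos (by linarith) hx.1.2.le (by linarith)
          _ ≤ _ := by
              rw [Finset.sum_const, nsmul_eq_mul]
              exact mul_le_mul_of_nonneg_right (cnt_ball _ (2 * R) (by linarith)) (by positivity)
      have e3 : (3 * (2 * R)) ^ (n : ℝ) * R ^ (-β) = B * R ^ ((n : ℝ) - β) := by
        rw [show 3 * (2 * R) = 6 * R by ring, Real.mul_rpow (by norm_num) hR0.le,
          sub_eq_add_neg, Real.rpow_add hR0, hB]
        ring
      have e4 : (2 * R) ^ ((n : ℝ) - β) = r * R ^ ((n : ℝ) - β) := by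
        rw [Real.mul_rpow (by norm_num) hR0.le]
      calc _ ≤ _ := fsum_cover _ _ _ _ hnn hsplit
        _ ≤ C * (r * R ^ ((n : ℝ) - β)) + B * R ^ ((n : ℝ) - β) := by
            rw [← e4, ← e3]; exact add_le_add e1 e2
        _ = (C * r + B) * R ^ ((n : ℝ) - β) := by ring
        _ = _ := by rw [hCeq]
  intro R hR
  obtain ⟨M, hM⟩ := pow_unbounded_of_one_lt D (by norm_num : (1:ℝ) < 2)
  refine key M R hR (hM.le.trans ?_)
  exact le_mul_of_one_le_right (by positivity) hR

lemma sum_shift {n : ℕ} (S : Finset (Fin n → ℤ)) (j : Fin n → ℤ) (P : ℝ → Prop) (g : ℝ → ℝ) :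
    ∑ i ∈ S.filter (fun i => P ‖i - j‖), g ‖i - j‖ =
      ∑ x ∈ (S.image (fun i => i - j)).filter (fun x => P ‖x‖), g ‖x‖ := by
  rw [Finset.filter_image, Finset.sum_image]
  intro x _ y _ h
  exact sub_left_injective h

/-! ### Bilinear bounds -/

def BilB {n : ℕ} (K : (Fin n → ℤ) → (Fin n → ℤ) → ℝ) (s t : ℝ) : Prop :=
  ∃ C : ℝ, 0 < C ∧ ∀ (S S' : Finset (Fin n → ℤ)) (u v : (Fin n → ℤ) → ℝ),
    (∀ i, 0 ≤ u i) → (∀ j, 0 ≤ v j) → ∑ i ∈ S', u i ≤ 1 → ∑ j ∈ S, v j ≤ 1 →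
    ∑ j ∈ S, ∑ i ∈ S', u i ^ s * v j ^ t * K i j ≤ C

lemma BilB.mono {n : ℕ} {K L : (Fin n → ℤ) → (Fin n → ℤ) → ℝ} {s t : ℝ} (h : BilB L s t)
    (hKL : ∀ i j, K i j ≤ L i j) : BilB K s t := by
  obtain ⟨C, hC, h⟩ := h
  refine ⟨C, hC, fun S S' u v hu hv hu1 hv1 => le_trans ?_ (h S S' u v hu hv hu1 hv1)⟩
  refine Finset.sum_le_sum fun j _ => Finset.sum_le_sum fun i _ => ?_
  exact mul_le_mul_of_nonneg_left (hKL i j)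
    (mul_nonneg (Real.rpow_nonneg (hu i) _) (Real.rpow_nonneg (hv j) _))

lemma BilB.const_mul {n : ℕ} {L : (Fin n → ℤ) → (Fin n → ℤ) → ℝ} {s t : ℝ} (h : BilB L s t)
    (c : ℝ) (hc : 0 < c) : BilB (fun i j => c * L i j) s t := by
  obtain ⟨C, hC, h⟩ := h
  refine ⟨c * C, by positivity, fun S S' u v hu hv hu1 hv1 => ?_⟩
  refine le_trans (le_of_eq ?_) (mul_le_mul_of_nonneg_left (h S S' u v hu hv hu1 hv1) hc.le)
  rw [Finset.mul_sum]
  refine Finset.sum_congr rfl fun j _ => ?_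
  rw [Finset.mul_sum]
  refine Finset.sum_congr rfl fun i _ => ?_
  ring

lemma BilB.sum {n m : ℕ} {L : Fin m → (Fin n → ℤ) → (Fin n → ℤ) → ℝ} {s t : ℝ}
    (h : ∀ k, BilB (L k) s t) : BilB (fun i j => ∑ k, L k i j) s t := by
  choose C hC h using h
  have hs : 0 ≤ ∑ k, C k := Finset.sum_nonneg fun k _ => (hC k).le
  refine ⟨∑ k, C k + 1, by linarith, fun S S' u v hu hv hu1 hv1 => ?_⟩
  have h2 : ∑ k, ∑ j ∈ S, ∑ i ∈ S', u i ^ s * v j ^ t * L k i j ≤ ∑ k, C k :=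
    Finset.sum_le_sum fun k _ => h k S S' u v hu hv hu1 hv1
  refine le_trans (le_of_eq ?_) (h2.trans (by linarith))
  symm
  rw [Finset.sum_comm]
  refine Finset.sum_congr rfl fun j _ => ?_
  rw [Finset.sum_comm]
  refine Finset.sum_congr rfl fun i _ => ?_
  rw [Finset.mul_sum]

lemma BilB.comp {n : ℕ} {L : (Fin n → ℤ) → (Fin n → ℤ) → ℝ} {s t : ℝ} (h : BilB L s t)
    (φ : (Fin n → ℤ) → (Fin n → ℤ)) (hφ : Function.Injective φ) :
    BilB (fun i j => L i (φ j)) s t := by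
  obtain ⟨C, hC, h⟩ := h
  refine ⟨C, hC, fun S S' u v hu hv hu1 hv1 => ?_⟩
  have hl : ∀ j, v (Function.invFun φ (φ j)) = v j := fun j => by
    rw [Function.leftInverse_invFun hφ j]
  have := h (S.image φ) S' u (fun j => v (Function.invFun φ j)) hu (fun j => hv _) hu1 (by
    rw [Finset.sum_image hφ.injOn]
    simpa only [hl] using hv1)
  rw [Finset.sum_image hφ.injOn] at this
  simpa only [hl] using this

/-- Half of the discrete Hardy–Littlewood–Sobolev inequality. -/
lemma hls_half {n : ℕ} (hn : 1 ≤ n) (s t a : ℝ) (hs0 : 0 < s) (hs : s < 1) (ht : t < 1)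
    (hst : 1 < s + t) (ha : a = n * (2 - s - t)) :
    ∃ C : ℝ, 0 < C ∧ ∀ (S : Finset (Fin n → ℤ)) (u : (Fin n → ℤ) → ℝ) (j : Fin n → ℤ) (w : ℝ),
      (∀ i, 0 ≤ u i) → ∑ i ∈ S, u i ≤ 1 → 0 < w → w ≤ 1 →
      ∑ i ∈ S.filter (fun i => u i ≤ w), u i ^ s * ‖i - j‖ ^ (-a) ≤ C * w ^ (1 - t) := by
  have hn0 : (0 : ℝ) < n := by exact_mod_cast hn
  have ha0 : 0 < a := by rw [ha]; apply mul_pos hn0; linarith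
  have han : a < n := by rw [ha]; nlinarith
  have hs1 : 0 < 1 - s := by linarith
  have hβ : (n : ℝ) < a / (1 - s) := by
    rw [lt_div_iff₀ hs1, ha]; nlinarith
  obtain ⟨C1, hC1, h1⟩ := sum_near (n := n) a ha0 han
  obtain ⟨C2, hC2, h2⟩ := sum_far (n := n) (a / (1 - s)) hβ
  refine ⟨C1 + C2 ^ (1 - s), by positivity, ?_⟩
  intro S u j w hu hu1 hw hw1
  set R : ℝ := w ^ (-(1 / (n : ℝ))) with hR
  have hR1 : 1 ≤ R := Real.one_le_rpow_of_pos_of_le_one_of_nonpos hw hw1 (by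
    have : 0 < 1 / (n : ℝ) := by positivity
    linarith)
  have hR0 : 0 < R := by linarith
  have hsplit : ∀ x ∈ S.filter (fun i => u i ≤ w),
          x ∈ (S.filter (fun i => u i ≤ w)).filter (fun i => ‖i - j‖ ≤ R) ∨
          x ∈ S.filter (fun i => R < ‖i - j‖) := by
    intro x hx
    simp only [Finset.mem_filter] at hx ⊢
    rcases le_or_gt ‖x - j‖ R with h | h
    · left; exact ⟨hx, h⟩
    · right; exact ⟨hx.1, h⟩
  have hnn : ∀ i : Fin n → ℤ, 0 ≤ u i ^ s * ‖i - j‖ ^ (-a) := fun i =>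
    mul_nonneg (Real.rpow_nonneg (hu i) _) (by positivity)
  have e1 : ∑ i ∈ (S.filter (fun i => u i ≤ w)).filter (fun i => ‖i - j‖ ≤ R), u i ^ s * ‖i - j‖ ^ (-a)
      ≤ C1 * w ^ (1 - t) := by
    calc _ ≤ ∑ i ∈ (S.filter (fun i => u i ≤ w)).filter (fun i => ‖i - j‖ ≤ R), w ^ s * ‖i - j‖ ^ (-a) := by
          refine Finset.sum_le_sum fun i hi => ?_
          simp only [Finset.mem_filter] at hi
          exact mul_le_mul_of_nonneg_right (Real.rpow_le_rpow (hu i) hi.1.2 hs0.le) (by positivity)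
      _ = w ^ s * ∑ i ∈ (S.filter (fun i => u i ≤ w)).filter (fun i => ‖i - j‖ ≤ R), ‖i - j‖ ^ (-a) := by
          rw [Finset.mul_sum]
      _ ≤ w ^ s * (C1 * R ^ ((n : ℝ) - a)) := by
          rw [sum_shift _ j (fun r => r ≤ R) (fun r => r ^ (-a))]
          exact mul_le_mul_of_nonneg_left (h1 _ R hR0) (by positivity)
      _ = C1 * w ^ (1 - t) := by
          rw [hR, ← Real.rpow_mul hw.le]
          rw [show w ^ s * (C1 * w ^ (-(1 / (n:ℝ)) * ((n : ℝ) - a))) =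
            C1 * (w ^ s * w ^ (-(1 / (n:ℝ)) * ((n : ℝ) - a))) by ring, ← Real.rpow_add hw]
          congr 2
          rw [ha]; field_simp; ring
  have e2 : ∑ i ∈ S.filter (fun i => R < ‖i - j‖), u i ^ s * ‖i - j‖ ^ (-a)
      ≤ C2 ^ (1 - s) * w ^ (1 - t) := by
    have hc : (1 / s).HolderConjugate (1 / (1 - s)) := by
      rw [Real.holderConjugate_iff]
      refine ⟨by rw [lt_div_iff₀ hs0]; linarith, ?_⟩
      simp
    have hH := Real.inner_le_Lp_mul_Lq_of_nonneg (S.filter (fun i => R < ‖i - j‖)) hc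
      (f := fun i => u i ^ s) (g := fun i => ‖i - j‖ ^ (-a))
      (fun i _ => Real.rpow_nonneg (hu i) _) (fun i _ => by positivity)
    refine hH.trans ?_
    have g1 : ∑ i ∈ S.filter (fun i => R < ‖i - j‖), (u i ^ s) ^ (1 / s) ≤ 1 := by
      have : ∀ i, (u i ^ s) ^ (1 / s) = u i := fun i => by
        rw [← Real.rpow_mul (hu i), mul_one_div_cancel hs0.ne', Real.rpow_one]
      simp only [this]
      exact (Finset.sum_le_sum_of_subset_of_nonneg (Finset.filter_subset _ _)
        (fun i _ _ => hu i)).trans hu1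
    have g2 : ∑ i ∈ S.filter (fun i => R < ‖i - j‖), (‖i - j‖ ^ (-a)) ^ (1 / (1 - s))
        ≤ C2 * R ^ ((n : ℝ) - a / (1 - s)) := by
      have : ∀ i : Fin n → ℤ, (‖i - j‖ ^ (-a)) ^ (1 / (1 - s)) = ‖i - j‖ ^ (-(a / (1 - s))) := fun i => by
        rw [← Real.rpow_mul (norm_nonneg _)]
        congr 1; ring
      simp only [this]
      rw [sum_shift _ j (fun r => R < r) (fun r => r ^ (-(a / (1 - s))))]
      exact h2 _ R hR1
    have g3 : (∑ i ∈ S.filter (fun i => R < ‖i - j‖), (u i ^ s) ^ (1 / s)) ^ (1 / (1 / s)) ≤ 1 := by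
      apply Real.rpow_le_one _ g1 (by positivity)
      exact Finset.sum_nonneg fun i _ => Real.rpow_nonneg (Real.rpow_nonneg (hu i) _) _
    have g4 : (∑ i ∈ S.filter (fun i => R < ‖i - j‖), (‖i - j‖ ^ (-a)) ^ (1 / (1 - s))) ^ (1 / (1 / (1 - s)))
        ≤ C2 ^ (1 - s) * w ^ (1 - t) := by
      rw [one_div_one_div]
      refine (Real.rpow_le_rpow (Finset.sum_nonneg fun i _ => by positivity) g2 hs1.le).trans ?_
      rw [Real.mul_rpow hC2.le (by positivity), hR, ← Real.rpow_mul hw.le, ← Real.rpow_mul hw.le]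
      apply le_of_eq
      congr 2
      rw [ha]; field_simp; ring
    calc _ ≤ 1 * (C2 ^ (1 - s) * w ^ (1 - t)) :=
          mul_le_mul g3 g4 (Real.rpow_nonneg (Finset.sum_nonneg fun i _ => by positivity) _) zero_le_one
      _ = _ := one_mul _
  calc _ ≤ _ := fsum_cover _ _ _ _ hnn hsplit
    _ ≤ C1 * w ^ (1 - t) + C2 ^ (1 - s) * w ^ (1 - t) := add_le_add e1 e2
    _ = _ := by ring

/-- Discrete Hardy–Littlewood–Sobolev inequality, bilinear form. -/
lemma hls {n : ℕ} (hn : 1 ≤ n) (s t a : ℝ) (hs0 : 0 < s) (hs : s < 1) (ht0 : 0 < t) (ht : t < 1)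
    (hst : 1 < s + t) (ha : a = n * (2 - s - t)) :
    BilB (n := n) (fun i j => ‖i - j‖ ^ (-a)) s t := by
  obtain ⟨C1, hC1, h1⟩ := hls_half hn s t a hs0 hs ht hst ha
  obtain ⟨C2, hC2, h2⟩ := hls_half hn t s a ht0 ht hs (by linarith) (by rw [ha]; ring)
  refine ⟨C1 + C2, by positivity, ?_⟩
  have aux : ∀ (s t C : ℝ), 0 < t → 0 < C → ∀ (S S' : Finset (Fin n → ℤ)) (u v : (Fin n → ℤ) → ℝ),
      (∀ i, 0 ≤ u i) → (∀ j, 0 ≤ v j) → ∑ i ∈ S', u i ≤ 1 → ∑ j ∈ S, v j ≤ 1 →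
      (∀ (S : Finset (Fin n → ℤ)) (u : (Fin n → ℤ) → ℝ) (j : Fin n → ℤ) (w : ℝ),
      (∀ i, 0 ≤ u i) → ∑ i ∈ S, u i ≤ 1 → 0 < w → w ≤ 1 →
      ∑ i ∈ S.filter (fun i => u i ≤ w), u i ^ s * ‖i - j‖ ^ (-a) ≤ C * w ^ (1 - t)) →
      ∑ j ∈ S, ∑ i ∈ S', (if u i ≤ v j then u i ^ s * v j ^ t * ‖i - j‖ ^ (-a) else 0) ≤ C := by
    intro s t C ht0 hC S S' u v hu hv hu1 hv1 h
    calc _ ≤ ∑ j ∈ S, C * v j := by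
          refine Finset.sum_le_sum fun j hj => ?_
          rw [← Finset.sum_filter]
          rcases (hv j).eq_or_lt with h0 | h0
          · rw [← h0, Real.zero_rpow ht0.ne']
            simp
          · have hvj : v j ≤ 1 := (Finset.single_le_sum (fun k _ => hv k) hj).trans hv1
            have := mul_le_mul_of_nonneg_left (h S' u j (v j) hu hu1 h0 hvj)
              (Real.rpow_nonneg (hv j) t)
            calc _ = v j ^ t * ∑ i ∈ S'.filter (fun i => u i ≤ v j), u i ^ s * ‖i - j‖ ^ (-a) := by
                  rw [Finset.mul_sum]
                  exact Finset.sum_congr rfl fun i _ => by ring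
              _ ≤ _ := this
              _ = C * (v j ^ t * v j ^ (1 - t)) := by ring
              _ = C * v j := by rw [← Real.rpow_add h0]; simp
      _ = C * ∑ j ∈ S, v j := by rw [Finset.mul_sum]
      _ ≤ C := mul_le_of_le_one_right hC.le hv1
  intro S S' u v hu hv hu1 hv1
  have a1 := aux s t C1 ht0 hC1 S S' u v hu hv hu1 hv1 h1
  have a2 := aux t s C2 hs0 hC2 S' S v u hv hu hv1 hu1 h2
  rw [Finset.sum_comm] at a2
  refine le_trans ?_ (add_le_add a1 a2)
  rw [← Finset.sum_add_distrib]
  refine Finset.sum_le_sum fun j _ => ?_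
  rw [← Finset.sum_add_distrib]
  refine Finset.sum_le_sum fun i _ => ?_
  have hnn : 0 ≤ u i ^ s * v j ^ t * ‖i - j‖ ^ (-a) :=
    mul_nonneg (mul_nonneg (Real.rpow_nonneg (hu i) _) (Real.rpow_nonneg (hv j) _)) (by positivity)
  rw [norm_sub_rev j i, mul_comm (v j ^ t) (u i ^ s)]
  rcases le_total (u i) (v j) with h | h
  · rw [if_pos h]
    split_ifs <;> linarith
  · rw [if_pos h]
    split_ifs <;> linarith

/-! ### Schur test for homogeneous kernels -/

lemma schur_sum {n : ℕ} (a σ : ℝ) (ha : 0 < a) (han : a < n) (hσ : 0 < σ) (hσn : σ < n) :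
    ∃ C : ℝ, 0 < C ∧ ∀ (S : Finset (Fin n → ℤ)) (j : Fin n → ℤ),
      ∑ i ∈ S, ‖i - j‖ ^ (-a) * (max (1 + ‖i‖) (1 + ‖j‖)) ^ (-((n : ℝ) - a)) * (1 + ‖i‖) ^ (-σ)
        ≤ C * (1 + ‖j‖) ^ (-σ) := by
  obtain ⟨C1, hC1, h1⟩ := sum_near (n := n) a ha han
  obtain ⟨C2, hC2, h2⟩ := sum_near (n := n) σ hσ hσn
  obtain ⟨C3, hC3, h3⟩ := sum_far (n := n) ((n : ℝ) + σ) (by linarith)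
  have h2' : ∀ (S : Finset (Fin n → ℤ)) (R : ℝ), 1 ≤ R →
      ∑ x ∈ S.filter (fun x => ‖x‖ ≤ R), (1 + ‖x‖) ^ (-σ) ≤ (C2 + 1) * R ^ ((n : ℝ) - σ) := by
    intro S R hR
    have hR' : 1 ≤ R ^ ((n : ℝ) - σ) := Real.one_le_rpow hR (by linarith)
    calc _ ≤ ∑ x ∈ S.filter (fun x => ‖x‖ ≤ R), (‖x‖ ^ (-σ) + if x = 0 then 1 else 0) := by
          refine Finset.sum_le_sum fun x _ => ?_
          by_cases hx : x = 0
          · rw [if_pos hx, hx]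
            simp
            positivity
          · rw [if_neg hx, add_zero]
            have := one_le_norm_int x hx
            exact Real.rpow_le_rpow_of_nonpos (by linarith) (by linarith) (by linarith)
      _ = ∑ x ∈ S.filter (fun x => ‖x‖ ≤ R), ‖x‖ ^ (-σ) +
          ∑ x ∈ S.filter (fun x => ‖x‖ ≤ R), (if x = 0 then (1:ℝ) else 0) := Finset.sum_add_distrib
      _ ≤ C2 * R ^ ((n : ℝ) - σ) + 1 := by
          refine add_le_add (h2 S R (by linarith)) ?_
          rw [Finset.sum_ite_eq']
          split_ifs <;> norm_num
      _ ≤ _ := by nlinarith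
  set D1 : ℝ := C1 * (1/2) ^ ((n : ℝ) - a) * (1/2) ^ (-σ) with hD1
  set D2 : ℝ := (1/2) ^ (-a) * ((C2 + 1) * 2 ^ ((n : ℝ) - σ)) with hD2
  set D3 : ℝ := (1/2) ^ (-a) * (C3 * 2 ^ (-σ)) with hD3
  refine ⟨D1 + (D2 + D3), by positivity, ?_⟩
  intro S j
  set R : ℝ := 1 + ‖j‖ with hR
  have hR1 : 1 ≤ R := by rw [hR]; linarith [norm_nonneg j]
  have hR0 : 0 < R := by linarith
  set f : (Fin n → ℤ) → ℝ := fun i =>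
    ‖i - j‖ ^ (-a) * (max (1 + ‖i‖) R) ^ (-((n : ℝ) - a)) * (1 + ‖i‖) ^ (-σ) with hf
  have hfnn : ∀ i, 0 ≤ f i := fun i => by rw [hf]; positivity
  have hmaxR : ∀ i : Fin n → ℤ, (max (1 + ‖i‖) R) ^ (-((n : ℝ) - a)) ≤ R ^ (-((n : ℝ) - a)) := fun i =>
    Real.rpow_le_rpow_of_nonpos hR0 (le_max_right _ _) (by linarith)
  have hhalf : ∀ e : ℝ, (R / 2) ^ e = (1/2) ^ e * R ^ e := fun e => by
    rw [← Real.mul_rpow (by norm_num) hR0.le]; congr 1; ring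
  have c1 : ∑ i ∈ S, f i ≤ ∑ i ∈ S.filter (fun i => ‖i - j‖ ≤ R / 2), f i +
      ∑ i ∈ S.filter (fun i => R / 2 < ‖i - j‖), f i := by
    refine fsum_cover _ _ _ _ hfnn fun x hx => ?_
    simp only [Finset.mem_filter]
    rcases le_or_gt ‖x - j‖ (R/2) with h | h
    · left; exact ⟨hx, h⟩
    · right; exact ⟨hx, h⟩
  have c2 : ∑ i ∈ S.filter (fun i => R / 2 < ‖i - j‖), f i ≤
      ∑ i ∈ (S.filter (fun i => R / 2 < ‖i - j‖)).filter (fun i => ‖i‖ ≤ 2 * R), f i +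
      ∑ i ∈ S.filter (fun i => 2 * R < ‖i‖), f i := by
    refine fsum_cover _ _ _ _ hfnn fun x hx => ?_
    simp only [Finset.mem_filter] at hx ⊢
    rcases le_or_gt ‖x‖ (2 * R) with h | h
    · left; exact ⟨hx, h⟩
    · right; exact ⟨hx.1, h⟩
  have e1 : ∑ i ∈ S.filter (fun i => ‖i - j‖ ≤ R / 2), f i ≤ D1 * R ^ (-σ) := by
    calc _ ≤ ∑ i ∈ S.filter (fun i => ‖i - j‖ ≤ R / 2),
            (R ^ (-((n : ℝ) - a)) * (R / 2) ^ (-σ)) * ‖i - j‖ ^ (-a) := by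
          refine Finset.sum_le_sum fun i hi => ?_
          simp only [Finset.mem_filter] at hi
          have : R / 2 ≤ 1 + ‖i‖ := by
            have := norm_sub_norm_le j i
            rw [norm_sub_rev] at this
            linarith [hi.2]
          have g : (1 + ‖i‖) ^ (-σ) ≤ (R / 2) ^ (-σ) :=
            Real.rpow_le_rpow_of_nonpos (by linarith) this (by linarith)
          simp only [hf]
          calc _ ≤ ‖i - j‖ ^ (-a) * R ^ (-((n : ℝ) - a)) * (R / 2) ^ (-σ) := by
                have := hmaxR i
                gcongr
            _ = _ := by ring
      _ = (R ^ (-((n : ℝ) - a)) * (R / 2) ^ (-σ)) *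
            ∑ i ∈ S.filter (fun i => ‖i - j‖ ≤ R / 2), ‖i - j‖ ^ (-a) := by rw [Finset.mul_sum]
      _ ≤ (R ^ (-((n : ℝ) - a)) * (R / 2) ^ (-σ)) * (C1 * (R / 2) ^ ((n : ℝ) - a)) := by
          rw [sum_shift _ j (fun r => r ≤ R / 2) (fun r => r ^ (-a))]
          exact mul_le_mul_of_nonneg_left (h1 _ (R / 2) (by linarith)) (by positivity)
      _ = D1 * R ^ (-σ) * (R ^ (-((n : ℝ) - a)) * R ^ ((n : ℝ) - a)) := by
          rw [hhalf, hhalf, hD1]; ring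
      _ = _ := by rw [← Real.rpow_add hR0]; simp
  have e2 : ∑ i ∈ (S.filter (fun i => R / 2 < ‖i - j‖)).filter (fun i => ‖i‖ ≤ 2 * R), f i
      ≤ D2 * R ^ (-σ) := by
    calc _ ≤ ∑ i ∈ (S.filter (fun i => R / 2 < ‖i - j‖)).filter (fun i => ‖i‖ ≤ 2 * R),
            ((R / 2) ^ (-a) * R ^ (-((n : ℝ) - a))) * (1 + ‖i‖) ^ (-σ) := by
          refine Finset.sum_le_sum fun i hi => ?_
          simp only [Finset.mem_filter] at hi
          have g : ‖i - j‖ ^ (-a) ≤ (R / 2) ^ (-a) :=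
            Real.rpow_le_rpow_of_nonpos (by linarith) hi.1.2.le (by linarith)
          simp only [hf]
          have := hmaxR i
          gcongr
      _ = ((R / 2) ^ (-a) * R ^ (-((n : ℝ) - a))) *
           ∑ i ∈ (S.filter (fun i => R / 2 < ‖i - j‖)).filter (fun i => ‖i‖ ≤ 2 * R), (1 + ‖i‖) ^ (-σ) := by
          rw [Finset.mul_sum]
      _ ≤ ((R / 2) ^ (-a) * R ^ (-((n : ℝ) - a))) * ((C2 + 1) * (2 * R) ^ ((n : ℝ) - σ)) :=
          mul_le_mul_of_nonneg_left (h2' _ (2 * R) (by linarith)) (by positivity)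
      _ = D2 * (R ^ (-a) * R ^ (-((n : ℝ) - a)) * R ^ ((n : ℝ) - σ)) := by
          rw [hhalf, Real.mul_rpow (by norm_num) hR0.le, hD2]; ring
      _ = _ := by rw [← Real.rpow_add hR0, ← Real.rpow_add hR0]; congr 2; ring
  have e3 : ∑ i ∈ S.filter (fun i => 2 * R < ‖i‖), f i ≤ D3 * R ^ (-σ) := by
    calc _ ≤ ∑ i ∈ S.filter (fun i => 2 * R < ‖i‖), (1/2) ^ (-a) * ‖i‖ ^ (-((n : ℝ) + σ)) := by
          refine Finset.sum_le_sum fun i hi => ?_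
          simp only [Finset.mem_filter] at hi
          have hi0 : 0 < ‖i‖ := by linarith
          have g0 : 1/2 * ‖i‖ ≤ ‖i - j‖ := by
            have := norm_sub_norm_le i j
            linarith
          have g : ‖i - j‖ ^ (-a) ≤ (1/2 * ‖i‖) ^ (-a) :=
            Real.rpow_le_rpow_of_nonpos (by linarith) g0 (by linarith)
          have g2 : (max (1 + ‖i‖) R) ^ (-((n : ℝ) - a)) ≤ ‖i‖ ^ (-((n : ℝ) - a)) :=
            Real.rpow_le_rpow_of_nonpos hi0 ((by linarith : ‖i‖ ≤ 1 + ‖i‖).trans (le_max_left _ _)) (by linarith)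
          have g3 : (1 + ‖i‖) ^ (-σ) ≤ ‖i‖ ^ (-σ) :=
            Real.rpow_le_rpow_of_nonpos hi0 (by linarith) (by linarith)
          simp only [hf]
          calc _ ≤ (1/2 * ‖i‖) ^ (-a) * ‖i‖ ^ (-((n : ℝ) - a)) * ‖i‖ ^ (-σ) := by gcongr
            _ = (1/2) ^ (-a) * (‖i‖ ^ (-a) * ‖i‖ ^ (-((n : ℝ) - a)) * ‖i‖ ^ (-σ)) := by
                rw [Real.mul_rpow (by norm_num) hi0.le]; ring
            _ = _ := by
                rw [← Real.rpow_add hi0, ← Real.rpow_add hi0]; congr 2; ring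
      _ = (1/2) ^ (-a) * ∑ i ∈ S.filter (fun i => 2 * R < ‖i‖), ‖i‖ ^ (-((n : ℝ) + σ)) := by
          rw [Finset.mul_sum]
      _ ≤ (1/2) ^ (-a) * (C3 * (2 * R) ^ ((n : ℝ) - ((n : ℝ) + σ))) :=
          mul_le_mul_of_nonneg_left (h3 S (2 * R) (by linarith)) (by positivity)
      _ = _ := by
          rw [show (n : ℝ) - ((n : ℝ) + σ) = -σ by ring, Real.mul_rpow (by norm_num) hR0.le, hD3]; ring
  calc ∑ i ∈ S, f i ≤ D1 * R ^ (-σ) + (D2 * R ^ (-σ) + D3 * R ^ (-σ)) := by linarith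
    _ = _ := by ring

lemma schur_bil {n : ℕ} (s t a : ℝ) (ha : 0 < a) (han : a < n)
    (hs0 : 0 < s) (ht0 : 0 < t) (hst : s + t = 1) :
    BilB (n := n) (fun i j => ‖i - j‖ ^ (-a) *
      (max (1 + ‖i‖) (1 + ‖j‖)) ^ (-((n : ℝ) - a))) s t := by
  have hn0 : (0 : ℝ) < n := by linarith
  obtain ⟨C1, hC1, h1⟩ := schur_sum (n := n) a (n * t) ha han (by positivity) (by nlinarith)
  obtain ⟨C2, hC2, h2⟩ := schur_sum (n := n) a (n * s) ha han (by positivity) (by nlinarith)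
  refine ⟨C1 + C2, by positivity, fun S S' u v hu hv hu1 hv1 => ?_⟩
  set H : (Fin n → ℤ) → (Fin n → ℤ) → ℝ := fun i j => ‖i - j‖ ^ (-a) *
      (max (1 + ‖i‖) (1 + ‖j‖)) ^ (-((n : ℝ) - a)) with hH
  have hHnn : ∀ i j, 0 ≤ H i j := fun i j => by rw [hH]; positivity
  have hHs : ∀ i j, H i j = H j i := fun i j => by
    simp only [hH]
    rw [norm_sub_rev, max_comm]
  have hb : ∀ i : Fin n → ℤ, 0 < 1 + ‖i‖ := fun i => by positivity
  have young : ∀ i j, u i ^ s * v j ^ t * H i j ≤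
      u i * (1 + ‖i‖) ^ (n * t) * (H j i * (1 + ‖j‖) ^ (-(n * t))) +
      v j * (1 + ‖j‖) ^ (n * s) * (H i j * (1 + ‖i‖) ^ (-(n * s))) := by
    intro i j
    set x := u i * (1 + ‖i‖) ^ (n * t) * (1 + ‖j‖) ^ (-(n * t)) with hx
    set y := v j * (1 + ‖j‖) ^ (n * s) * (1 + ‖i‖) ^ (-(n * s)) with hy
    have hx0 : 0 ≤ x := by have := hu i; positivity
    have hy0 : 0 ≤ y := by have := hv j; positivity
    have hxy : x ^ s * y ^ t = u i ^ s * v j ^ t := by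
      have hui := hu i
      have hvj := hv j
      rw [hx, hy, Real.mul_rpow (by positivity) (by positivity), Real.mul_rpow (by positivity) (by positivity),
        Real.mul_rpow (by positivity) (by positivity), Real.mul_rpow (by positivity) (by positivity),
        ← Real.rpow_mul (hb i).le, ← Real.rpow_mul (hb j).le, ← Real.rpow_mul (hb i).le, ← Real.rpow_mul (hb j).le]
      have p1 : (1 + ‖i‖) ^ (n * t * s) * (1 + ‖i‖) ^ (-(n * s) * t) = 1 := by
        rw [← Real.rpow_add (hb i), show n * t * s + -(n * s) * t = 0 by ring, Real.rpow_zero]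
      have p2 : (1 + ‖j‖) ^ (-(n * t) * s) * (1 + ‖j‖) ^ (n * s * t) = 1 := by
        rw [← Real.rpow_add (hb j), show -(n * t) * s + n * s * t = 0 by ring, Real.rpow_zero]
      calc _ = u i ^ s * v j ^ t * ((1 + ‖i‖) ^ (n * t * s) * (1 + ‖i‖) ^ (-(n * s) * t)) *
            ((1 + ‖j‖) ^ (-(n * t) * s) * (1 + ‖j‖) ^ (n * s * t)) := by ring
        _ = _ := by rw [p1, p2]; ring
    have hg := Real.geom_mean_le_arith_mean2_weighted hs0.le ht0.le hx0 hy0 hst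
    rw [hxy] at hg
    have hg' : u i ^ s * v j ^ t ≤ x + y := by nlinarith
    calc _ ≤ (x + y) * H i j := mul_le_mul_of_nonneg_right hg' (hHnn i j)
      _ = _ := by rw [hHs j i, hx, hy]; ring
  have one : ∀ (σ C : ℝ) (S S' : Finset (Fin n → ℤ)) (u : (Fin n → ℤ) → ℝ), 0 < C → (∀ i, 0 ≤ u i) →
      ∑ i ∈ S', u i ≤ 1 →
      (∀ (S : Finset (Fin n → ℤ)) (j : Fin n → ℤ),
        ∑ i ∈ S, H i j * (1 + ‖i‖) ^ (-σ) ≤ C * (1 + ‖j‖) ^ (-σ)) →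
      ∑ i ∈ S', ∑ j ∈ S, u i * (1 + ‖i‖) ^ σ * (H j i * (1 + ‖j‖) ^ (-σ)) ≤ C := by
    intro σ C S S' u hC hu hu1 h
    calc _ ≤ ∑ i ∈ S', C * u i := by
          refine Finset.sum_le_sum fun i _ => ?_
          rw [← Finset.mul_sum]
          have hui := hu i
          calc _ ≤ u i * (1 + ‖i‖) ^ σ * (C * (1 + ‖i‖) ^ (-σ)) :=
                mul_le_mul_of_nonneg_left (h S i) (by positivity)
            _ = C * u i * ((1 + ‖i‖) ^ σ * (1 + ‖i‖) ^ (-σ)) := by ring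
            _ = _ := by rw [← Real.rpow_add (hb i)]; simp
      _ = C * ∑ i ∈ S', u i := by rw [Finset.mul_sum]
      _ ≤ C := mul_le_of_le_one_right hC.le hu1
  have a1 := one (n * t) C1 S S' u hC1 hu hu1 h1
  have a2 := one (n * s) C2 S' S v hC2 hv hv1 h2
  rw [Finset.sum_comm] at a1
  refine le_trans ?_ (add_le_add a1 a2)
  rw [← Finset.sum_add_distrib]
  refine Finset.sum_le_sum fun j _ => ?_
  rw [← Finset.sum_add_distrib]
  exact Finset.sum_le_sum fun i _ => young i j

/-! ### Matrices and the kernel -/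

lemma mulVec_upper {n : ℕ} (A : Matrix (Fin n) (Fin n) ℤ) :
    ∃ C : ℝ, 0 < C ∧ ∀ j, ‖A.mulVec j‖ ≤ C * ‖j‖ := by
  have hs : 0 ≤ ∑ r, ∑ c, ‖A r c‖ := by positivity
  refine ⟨∑ r, ∑ c, ‖A r c‖ + 1, by linarith, fun j => ?_⟩
  rw [pi_norm_le_iff_of_nonneg (by positivity)]
  intro r
  calc ‖A.mulVec j r‖ = ‖∑ c, A r c * j c‖ := rfl
    _ ≤ ∑ c, ‖A r c * j c‖ := norm_sum_le _ _
    _ ≤ ∑ c, ‖A r c‖ * ‖j‖ := by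
        refine Finset.sum_le_sum fun c _ => ?_
        refine (norm_mul_le _ _).trans ?_
        exact mul_le_mul_of_nonneg_left (norm_le_pi_norm j c) (norm_nonneg _)
    _ = (∑ c, ‖A r c‖) * ‖j‖ := by rw [Finset.sum_mul]
    _ ≤ _ := by
        refine mul_le_mul_of_nonneg_right ?_ (norm_nonneg _)
        have := Finset.single_le_sum (f := fun r => ∑ c, ‖A r c‖) (s := Finset.univ)
          (fun r _ => by positivity) (Finset.mem_univ r)
        linarith

lemma mulVec_lower {n : ℕ} (A : Matrix (Fin n) (Fin n) ℤ) (hA : A.det ≠ 0) :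
    ∃ C : ℝ, 0 < C ∧ ∀ j, ‖j‖ ≤ C * ‖A.mulVec j‖ := by
  obtain ⟨C, hC, h⟩ := mulVec_upper A.adjugate
  refine ⟨C, hC, fun j => ?_⟩
  have h1 := h (A.mulVec j)
  rw [Matrix.mulVec_mulVec, Matrix.adjugate_mul, Matrix.smul_mulVec, Matrix.one_mulVec] at h1
  refine le_trans ?_ h1
  rw [pi_norm_le_iff_of_nonneg (norm_nonneg _)]
  intro r
  refine le_trans ?_ (norm_le_pi_norm _ r)
  rw [Pi.smul_apply, smul_eq_mul, Int.norm_eq_abs, Int.norm_eq_abs]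
  rw [Int.cast_mul, abs_mul]
  have : (1 : ℝ) ≤ |(A.det : ℝ)| := by exact_mod_cast Int.one_le_abs hA
  exact le_mul_of_one_le_left (abs_nonneg _) this

lemma mulVec_inj {n : ℕ} (A : Matrix (Fin n) (Fin n) ℤ) (hA : A.det ≠ 0) :
    Function.Injective (fun j => A.mulVec j) := by
  obtain ⟨C, hC, h⟩ := mulVec_lower A hA
  intro x y hxy
  have h1 := h (x - y)
  simp only at hxy
  rw [Matrix.mulVec_sub, hxy, sub_self, norm_zero, mul_zero] at h1
  exact sub_eq_zero.1 (norm_le_zero_iff.1 h1)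

noncomputable def kerT {n m : ℕ} (al : Fin m → ℝ) (A : Fin m → Matrix (Fin n) (Fin n) ℤ)
    (i j : Fin n → ℤ) : ℝ :=
  if ∀ k, i ≠ (A k).mulVec j then (∏ k, eucZ (i - (A k).mulVec j) ^ (al k))⁻¹ else 0

lemma kerT_nonneg {n m : ℕ} (al : Fin m → ℝ) (A : Fin m → Matrix (Fin n) (Fin n) ℤ)
    (i j : Fin n → ℤ) : 0 ≤ kerT al A i j := by
  unfold kerT
  split_ifs
  · refine inv_nonneg.2 (Finset.prod_nonneg fun k _ => Real.rpow_nonneg (Real.sqrt_nonneg _) _)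
  · exact le_rfl

/-- Off the diagonals, the kernel is bounded by the product of sup-norm powers. -/
lemma kerT_le {n m : ℕ} (al : Fin m → ℝ) (hal : ∀ k, 0 < al k) (A : Fin m → Matrix (Fin n) (Fin n) ℤ)
    (i j : Fin n → ℤ) (h : ∀ k, i ≠ (A k).mulVec j) :
    kerT al A i j ≤ ∏ k, ‖i - (A k).mulVec j‖ ^ (-al k) := by
  unfold kerT
  rw [if_pos h, ← Finset.prod_inv_distrib]
  refine Finset.prod_le_prod (fun k _ => inv_nonneg.2 (Real.rpow_nonneg (Real.sqrt_nonneg _) _)) fun k _ => ?_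
  have h1 : 1 ≤ ‖i - (A k).mulVec j‖ := one_le_norm_int _ (sub_ne_zero.2 (h k))
  have h2 := norm_le_eucZ (i - (A k).mulVec j)
  rw [← Real.rpow_neg (by linarith)]
  exact Real.rpow_le_rpow_of_nonpos (by linarith) h2 (by linarith [hal k])

lemma ker_pos_case {n m : ℕ} (hm : 0 < m) (al : Fin m → ℝ) (hal : ∀ k, 0 < al k) (a : ℝ)
    (hsum : ∑ k, al k = a) (A : Fin m → Matrix (Fin n) (Fin n) ℤ) (i j : Fin n → ℤ) :
    kerT al A i j ≤ ∑ k, ‖i - (A k).mulVec j‖ ^ (-a) := by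
  by_cases h : ∀ k, i ≠ (A k).mulVec j
  swap
  · unfold kerT
    rw [if_neg h]
    positivity
  have : Nonempty (Fin m) := ⟨⟨0, hm⟩⟩
  obtain ⟨k, hk⟩ := Finite.exists_min (fun k => ‖i - (A k).mulVec j‖)
  have hk1 : 1 ≤ ‖i - (A k).mulVec j‖ := one_le_norm_int _ (sub_ne_zero.2 (h k))
  refine (kerT_le al hal A i j h).trans ?_
  calc ∏ l, ‖i - (A l).mulVec j‖ ^ (-al l) ≤ ∏ l, ‖i - (A k).mulVec j‖ ^ (-al l) := by
        refine Finset.prod_le_prod (fun l _ => by positivity) fun l _ => ?_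
        exact Real.rpow_le_rpow_of_nonpos (by linarith) (hk l) (by linarith [hal l])
    _ = ‖i - (A k).mulVec j‖ ^ (-a) := by
        rw [← Real.rpow_sum_of_pos (by linarith), Finset.sum_neg_distrib, hsum]
    _ ≤ _ := Finset.single_le_sum (f := fun k => ‖i - (A k).mulVec j‖ ^ (-a))
        (fun l _ => by positivity) (Finset.mem_univ k)

lemma ker_zero_case {n m : ℕ} (hm : 0 < m) (al : Fin m → ℝ) (hal : ∀ k, 0 < al k)
    (hsum : ∑ k, al k = n) (A : Fin m → Matrix (Fin n) (Fin n) ℤ)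
    (hA0 : ∀ k l, k ≠ l → (A k - A l).det ≠ 0) :
    ∃ C : ℝ, 0 < C ∧ ∀ i j, kerT al A i j ≤ ∑ k, C * (‖i - (A k).mulVec j‖ ^ (-al k) *
      (max (1 + ‖i‖) (1 + ‖(A k).mulVec j‖)) ^ (-((n : ℝ) - al k))) := by
  -- uniform constants
  have hU : ∀ k, ∃ C : ℝ, 0 < C ∧ ∀ j, ‖(A k).mulVec j‖ ≤ C * ‖j‖ := fun k => mulVec_upper _
  choose U hU0 hU using hU
  have hL : ∀ k l, ∃ C : ℝ, 0 < C ∧ (k ≠ l → ∀ j, ‖j‖ ≤ C * ‖(A k - A l).mulVec j‖) := by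
    intro k l
    by_cases hkl : k = l
    · exact ⟨1, one_pos, fun h => absurd hkl h⟩
    · obtain ⟨C, hC, h⟩ := mulVec_lower _ (hA0 k l hkl)
      exact ⟨C, hC, fun _ => h⟩
  choose L hL0 hL using hL
  set UU : ℝ := ∑ k, U k with hUU
  set LL : ℝ := ∑ k, ∑ l, L k l with hLL
  have hUU0 : 0 ≤ UU := Finset.sum_nonneg fun k _ => (hU0 k).le
  have hLL0 : 0 ≤ LL := Finset.sum_nonneg fun k _ => Finset.sum_nonneg fun l _ => (hL0 k l).le
  have hUk : ∀ k, U k ≤ UU := fun k =>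
    Finset.single_le_sum (f := U) (fun l _ => (hU0 l).le) (Finset.mem_univ k)
  have hLk : ∀ k l, L k l ≤ LL := fun k l =>
    (Finset.single_le_sum (f := fun l => L k l) (fun l _ => (hL0 k l).le) (Finset.mem_univ l)).trans
    (Finset.single_le_sum (f := fun k => ∑ l, L k l)
      (fun k _ => Finset.sum_nonneg fun l _ => (hL0 k l).le) (Finset.mem_univ k))
  set D : ℝ := 2 + UU * (2 * LL) with hD
  have hD1 : 1 ≤ D := by rw [hD]; nlinarith [mul_nonneg hUU0 hLL0]
  have hD0 : 0 < D := by linarith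
  refine ⟨D ^ (n : ℝ), by positivity, fun i j => ?_⟩
  by_cases h : ∀ k, i ≠ (A k).mulVec j
  swap
  · unfold kerT
    rw [if_neg h]
    positivity
  have : Nonempty (Fin m) := ⟨⟨0, hm⟩⟩
  obtain ⟨k, hk⟩ := Finite.exists_min (fun k => ‖i - (A k).mulVec j‖)
  have hd1 : ∀ k, 1 ≤ ‖i - (A k).mulVec j‖ := fun k => one_le_norm_int _ (sub_ne_zero.2 (h k))
  set M : ℝ := max (1 + ‖i‖) (1 + ‖(A k).mulVec j‖) with hM
  have hM1 : 1 ≤ M := le_max_of_le_left (by linarith [norm_nonneg i])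
  have hM0 : 0 < M := by linarith
  have hdl : ∀ l, l ≠ k → M ≤ D * ‖i - (A l).mulVec j‖ := by
    intro l hl
    set d := ‖i - (A l).mulVec j‖ with hd
    have hd1' : 1 ≤ d := hd1 l
    have hj : ‖j‖ ≤ 2 * LL * d := by
      have h1 := hL k l hl.symm j
      have h2 : ‖(A k - A l).mulVec j‖ ≤ 2 * d := by
        rw [Matrix.sub_mulVec]
        have : (A k).mulVec j - (A l).mulVec j = (i - (A l).mulVec j) - (i - (A k).mulVec j) := by abel
        rw [this]
        have := norm_sub_le (i - (A l).mulVec j) (i - (A k).mulVec j)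
        have := hk l
        linarith
      calc ‖j‖ ≤ L k l * ‖(A k - A l).mulVec j‖ := h1
        _ ≤ LL * (2 * d) := mul_le_mul (hLk k l) h2 (norm_nonneg _) hLL0
        _ = _ := by ring
    have hAj : ∀ l', ‖(A l').mulVec j‖ ≤ UU * (2 * LL) * d := by
      intro l'
      calc _ ≤ U l' * ‖j‖ := hU l' j
        _ ≤ UU * (2 * LL * d) := mul_le_mul (hUk l') hj (norm_nonneg _) hUU0
        _ = _ := by ring
    have hi : ‖i‖ ≤ d + UU * (2 * LL) * d := by
      have := norm_sub_norm_le i ((A l).mulVec j)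
      have := hAj l
      linarith
    have hk' := hAj k
    rw [hM, hD]
    apply max_le <;> nlinarith
  refine (kerT_le al hal A i j h).trans ?_
  have hprod : ∏ l, ‖i - (A l).mulVec j‖ ^ (-al l) ≤
      D ^ (n : ℝ) * (‖i - (A k).mulVec j‖ ^ (-al k) * M ^ (-((n : ℝ) - al k))) := by
    rw [← Finset.mul_prod_erase _ _ (Finset.mem_univ k)]
    have hs : ∑ l ∈ Finset.univ.erase k, al l = n - al k := by
      have := Finset.add_sum_erase Finset.univ al (Finset.mem_univ k)
      linarith
    have h1 : ∏ l ∈ Finset.univ.erase k, ‖i - (A l).mulVec j‖ ^ (-al l) ≤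
        (M / D) ^ (-((n : ℝ) - al k)) := by
      calc _ ≤ ∏ l ∈ Finset.univ.erase k, (M / D) ^ (-al l) := by
            refine Finset.prod_le_prod (fun l _ => by positivity) fun l hl => ?_
            refine Real.rpow_le_rpow_of_nonpos (by positivity) ?_ (by linarith [hal l])
            rw [div_le_iff₀ hD0, mul_comm]
            exact hdl l (Finset.ne_of_mem_erase hl)
        _ = _ := by
            rw [← Real.rpow_sum_of_pos (by positivity), Finset.sum_neg_distrib, hs]
    have h2 : (M / D) ^ (-((n : ℝ) - al k)) ≤ D ^ (n : ℝ) * M ^ (-((n : ℝ) - al k)) := by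
      rw [Real.div_rpow hM0.le hD0.le, div_eq_mul_inv, ← Real.rpow_neg hD0.le, neg_neg, mul_comm]
      refine mul_le_mul_of_nonneg_right ?_ (by positivity)
      exact Real.rpow_le_rpow_of_exponent_le hD1 (by linarith [hal k])
    calc _ ≤ ‖i - (A k).mulVec j‖ ^ (-al k) * (D ^ (n : ℝ) * M ^ (-((n : ℝ) - al k))) :=
          mul_le_mul_of_nonneg_left (h1.trans h2) (by positivity)
      _ = _ := by ring
  refine hprod.trans ?_
  exact Finset.single_le_sum (f := fun k => D ^ (n : ℝ) * (‖i - (A k).mulVec j‖ ^ (-al k) *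
      (max (1 + ‖i‖) (1 + ‖(A k).mulVec j‖)) ^ (-((n : ℝ) - al k))))
        (fun l _ => by positivity) (Finset.mem_univ k)

/-! ### From bilinear bounds to norm bounds -/

lemma dual_fin {n : ℕ} {K : (Fin n → ℤ) → (Fin n → ℤ) → ℝ} (hK : ∀ i j, 0 ≤ K i j)
    {s q p C : ℝ} (hs : 0 < s) (hq : 1 < q) (hp : p ≤ 1 / s) (hC : 0 < C)
    (hB : ∀ (S S' : Finset (Fin n → ℤ)) (u v : (Fin n → ℤ) → ℝ),
      (∀ i, 0 ≤ u i) → (∀ j, 0 ≤ v j) → ∑ i ∈ S', u i ≤ 1 → ∑ j ∈ S, v j ≤ 1 →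
      ∑ j ∈ S, ∑ i ∈ S', u i ^ s * v j ^ (1 - 1 / q) * K i j ≤ C)
    (hp0 : 0 < p) (S S' : Finset (Fin n → ℤ)) (g : (Fin n → ℤ) → ℝ) (hg : ∀ i, 0 ≤ g i)
    (hg1 : ∑ i ∈ S', g i ^ p ≤ 1) :
    ∑ j ∈ S, (∑ i ∈ S', g i * K i j) ^ q ≤ C ^ q := by
  set F : (Fin n → ℤ) → ℝ := fun j => ∑ i ∈ S', g i * K i j with hF
  have hF0 : ∀ j, 0 ≤ F j := fun j => Finset.sum_nonneg fun i _ => mul_nonneg (hg i) (hK i j)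
  set N : ℝ := ∑ j ∈ S, F j ^ q with hN
  have hN0 : 0 ≤ N := Finset.sum_nonneg fun j _ => Real.rpow_nonneg (hF0 j) _
  rcases hN0.eq_or_lt with h0 | h0
  · rw [← h0]; positivity
  have hu1 : ∑ i ∈ S', g i ^ (1 / s) ≤ 1 := by
    refine le_trans (Finset.sum_le_sum fun i hi => ?_) hg1
    have h1 : g i ^ p ≤ 1 :=
      (Finset.single_le_sum (f := fun i => g i ^ p) (fun k _ => Real.rpow_nonneg (hg k) _) hi).trans hg1
    have h2 : g i ≤ 1 := by
      by_contra hcon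
      push Not at hcon
      have := Real.one_lt_rpow hcon hp0
      linarith
    exact Real.rpow_le_rpow_of_exponent_ge_of_imp (hg i) h2 hp (fun _ h => absurd h (one_div_pos.2 hs).ne')
  have hv1 : ∑ j ∈ S, F j ^ q / N ≤ 1 := by
    rw [← Finset.sum_div, ← hN, div_self h0.ne']
  have hb := hB S S' (fun i => g i ^ (1 / s)) (fun j => F j ^ q / N)
    (fun i => Real.rpow_nonneg (hg i) _) (fun j => div_nonneg (Real.rpow_nonneg (hF0 j) _) hN0) hu1 hv1
  have hus : ∀ i, (g i ^ (1 / s)) ^ s = g i := fun i => by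
    rw [← Real.rpow_mul (hg i), one_div_mul_cancel hs.ne', Real.rpow_one]
  have hq0 : 0 < q := by linarith
  have hq1 : 1 / q < 1 := by rw [div_lt_one hq0]; exact hq
  have hrow : ∀ j, ∑ i ∈ S', (g i ^ (1 / s)) ^ s * (F j ^ q / N) ^ (1 - 1 / q) * K i j
      = F j ^ q / N ^ (1 - 1 / q) := by
    intro j
    calc _ = (F j ^ q / N) ^ (1 - 1 / q) * F j := by
          rw [hF, Finset.mul_sum]
          refine Finset.sum_congr rfl fun i _ => ?_
          rw [hus]; ring
      _ = (F j ^ (q - 1) * F j) / N ^ (1 - 1 / q) := by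
          rw [Real.div_rpow (Real.rpow_nonneg (hF0 j) _) hN0, ← Real.rpow_mul (hF0 j),
            show q * (1 - 1 / q) = q - 1 by field_simp]
          ring
      _ = _ := by
          congr 1
          rcases (hF0 j).eq_or_lt with h | h
          · rw [← h, mul_zero, Real.zero_rpow hq0.ne']
          · rw [← Real.rpow_add_one h.ne']; congr 1; ring
  simp only [hrow] at hb
  rw [← Finset.sum_div, ← hN] at hb
  have hb2 : N ^ (1 / q) ≤ C := by
    refine le_trans (le_of_eq ?_) hb
    rw [eq_div_iff (by positivity), ← Real.rpow_add h0]
    simp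
  calc N = (N ^ (1 / q)) ^ q := by
        rw [← Real.rpow_mul hN0, one_div_mul_cancel hq0.ne', Real.rpow_one]
    _ ≤ C ^ q := Real.rpow_le_rpow (by positivity) hb2 hq0.le

lemma bil_to_norm {n : ℕ} {K : (Fin n → ℤ) → (Fin n → ℤ) → ℝ} (hK : ∀ i j, 0 ≤ K i j)
    {s q p : ℝ} (hs : 0 < s) (hq : 1 < q) (hp0 : 0 < p) (hp : p ≤ 1 / s)
    (hB : BilB K s (1 - 1 / q)) :
    ∃ C : ℝ, 0 < C ∧ ∀ b : (Fin n → ℤ) → ℝ,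
      (∑' j, (∑' i, ENNReal.ofReal (|b i| * K i j)) ^ q) ^ (1 / q) ≤ ENNReal.ofReal C * lpNorm p b := by
  obtain ⟨C, hC, hB⟩ := hB
  have hq0 : 0 < q := by linarith
  refine ⟨C, hC, fun b => ?_⟩
  unfold lpNorm
  set N : ℝ≥0∞ := ∑' i, ENNReal.ofReal |b i| ^ p with hN
  by_cases hNt : N = ⊤
  · rw [hNt, ENNReal.top_rpow_of_pos (by positivity), ENNReal.mul_top (by simpa using hC)]
    exact le_top
  by_cases hN0 : N = 0
  · have hb0 : ∀ i, |b i| = 0 := by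
      intro i
      have h1 := (ENNReal.tsum_eq_zero.1 hN0) i
      rw [ENNReal.rpow_eq_zero_iff] at h1
      rcases h1 with h1 | h1
      · exact le_antisymm (ENNReal.ofReal_eq_zero.1 h1.1) (abs_nonneg _)
      · exact absurd h1.1 ENNReal.ofReal_ne_top
    simp only [hb0, zero_mul, ENNReal.ofReal_zero, tsum_zero, ENNReal.zero_rpow_of_pos hq0]
    rw [ENNReal.zero_rpow_of_pos (by positivity)]
    exact zero_le
  set N' : ℝ := N.toReal with hN'
  have hN'0 : 0 < N' := ENNReal.toReal_pos hN0 hNt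
  set L : ℝ := N' ^ (1 / p) with hL
  have hL0 : 0 < L := by positivity
  have hNL : N ^ (1 / p) = ENNReal.ofReal L := by
    rw [hL, ← ENNReal.ofReal_rpow_of_pos hN'0, hN', ENNReal.ofReal_toReal hNt]
  rw [hNL, ← ENNReal.ofReal_mul hC.le]
  -- finite sums
  have hfin : ∀ S S' : Finset (Fin n → ℤ),
      ∑ j ∈ S, (∑ i ∈ S', ENNReal.ofReal (|b i| * K i j)) ^ q ≤ ENNReal.ofReal (C * L) ^ q := by
    intro S S'
    have hg1 : ∑ i ∈ S', (|b i| / L) ^ p ≤ 1 := by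
      have h1 : ∑ i ∈ S', |b i| ^ p ≤ N' := by
        rw [← ENNReal.ofReal_le_ofReal_iff hN'0.le, hN', ENNReal.ofReal_toReal hNt,
          ENNReal.ofReal_sum_of_nonneg (fun i _ => by positivity), hN]
        refine le_trans (le_of_eq ?_) (ENNReal.sum_le_tsum S')
        exact Finset.sum_congr rfl fun i _ => (ENNReal.ofReal_rpow_of_nonneg (abs_nonneg _) hp0.le).symm
      have h2 : L ^ p = N' := by
        rw [hL, ← Real.rpow_mul hN'0.le, one_div_mul_cancel hp0.ne', Real.rpow_one]
      calc _ = (∑ i ∈ S', |b i| ^ p) / N' := by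
            rw [Finset.sum_div]
            refine Finset.sum_congr rfl fun i _ => ?_
            rw [Real.div_rpow (abs_nonneg _) hL0.le, h2]
        _ ≤ 1 := by rw [div_le_one hN'0]; exact h1
    have h := dual_fin hK hs hq hp hC hB hp0 S S' (fun i => |b i| / L) (fun i => by positivity) hg1
    have hreal : ∑ j ∈ S, (∑ i ∈ S', |b i| * K i j) ^ q ≤ (C * L) ^ q := by
      calc _ = ∑ j ∈ S, L ^ q * (∑ i ∈ S', |b i| / L * K i j) ^ q := by
            refine Finset.sum_congr rfl fun j _ => ?_
            rw [← Real.mul_rpow hL0.le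
              (Finset.sum_nonneg fun i _ => mul_nonneg (by positivity) (hK i j)), Finset.mul_sum]
            congr 1
            refine Finset.sum_congr rfl fun i _ => ?_
            field_simp
        _ = L ^ q * ∑ j ∈ S, (∑ i ∈ S', |b i| / L * K i j) ^ q := by rw [Finset.mul_sum]
        _ ≤ L ^ q * C ^ q := mul_le_mul_of_nonneg_left h (by positivity)
        _ = _ := by rw [mul_comm, Real.mul_rpow hC.le hL0.le]
    have hnn : ∀ j, 0 ≤ ∑ i ∈ S', |b i| * K i j := fun j =>
      Finset.sum_nonneg fun i _ => mul_nonneg (abs_nonneg _) (hK i j)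
    rw [ENNReal.ofReal_rpow_of_nonneg (by positivity) hq0.le]
    refine le_trans (le_of_eq ?_) (ENNReal.ofReal_le_ofReal hreal)
    rw [ENNReal.ofReal_sum_of_nonneg (fun j _ => Real.rpow_nonneg (hnn j) _)]
    refine Finset.sum_congr rfl fun j _ => ?_
    rw [← ENNReal.ofReal_rpow_of_nonneg (hnn j) hq0.le,
      ENNReal.ofReal_sum_of_nonneg (fun i _ => mul_nonneg (abs_nonneg _) (hK i j))]
  have hS : ∀ S : Finset (Fin n → ℤ),
      ∑ j ∈ S, (∑' i, ENNReal.ofReal (|b i| * K i j)) ^ q ≤ ENNReal.ofReal (C * L) ^ q := by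
    intro S
    have ht : Filter.Tendsto (fun S' : Finset (Fin n → ℤ) =>
        ∑ j ∈ S, (∑ i ∈ S', ENNReal.ofReal (|b i| * K i j)) ^ q) Filter.atTop
        (nhds (∑ j ∈ S, (∑' i, ENNReal.ofReal (|b i| * K i j)) ^ q)) := by
      refine tendsto_finsetSum _ fun j _ => ?_
      exact ((ENNReal.continuous_rpow_const (y := q)).tendsto _).comp ENNReal.summable.hasSum
    exact le_of_tendsto' ht (hfin S)
  have htot : ∑' j, (∑' i, ENNReal.ofReal (|b i| * K i j)) ^ q ≤ ENNReal.ofReal (C * L) ^ q := by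
    rw [ENNReal.tsum_eq_iSup_sum]
    exact iSup_le hS
  calc _ ≤ (ENNReal.ofReal (C * L) ^ q) ^ (1 / q) := ENNReal.rpow_le_rpow htot (by positivity)
    _ = _ := by rw [← ENNReal.rpow_mul, mul_one_div_cancel hq0.ne', ENNReal.rpow_one]

lemma Tfs_eq {n m : ℕ} (al : Fin m → ℝ) (A : Fin m → Matrix (Fin n) (Fin n) ℤ)
    (b : (Fin n → ℤ) → ℝ) (j : Fin n → ℤ) :
    Tfs al A b j = ∑' i, ENNReal.ofReal (|b i| * kerT al A i j) := by
  unfold Tfs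
  refine tsum_congr fun i => ?_
  unfold kerT
  split_ifs with h
  · rw [div_eq_mul_inv]
  · simp

theorem stmt15 (n : ℕ) (hn : 1 ≤ n) (α : ℝ) (hα0 : 0 ≤ α) (hαn : α < n)
    (m : ℕ) (hm : 1 - α / n < m)
    (al : Fin m → ℝ) (hal : ∀ k, 0 < al k) (hsum : ∑ k, al k = n - α)
    (A : Fin m → Matrix (Fin n) (Fin n) ℤ) (hA : ∀ k, (A k).det ≠ 0)
    (hA0 : α = 0 → ∀ k l, k ≠ l → (A k - A l).det ≠ 0)
    (p q : ℝ) (hq1 : (n : ℝ) / (n - α) < q) (hp0 : 0 < p)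
    (hpq : p ≤ n * q / (n + α * q)) :
    ∃ C : ℝ, 0 < C ∧ ∀ b : (Fin n → ℤ) → ℝ,
      (∑' j : Fin n → ℤ, (Tfs al A b j) ^ q) ^ (1 / q) ≤ ENNReal.ofReal C * lpNorm p b := by

  have hn0 : (0 : ℝ) < n := by exact_mod_cast hn
  have hm0 : 0 < m := by
    have h1 : α / n < 1 := by rw [div_lt_one hn0]; exact hαn
    have : (0 : ℝ) < m := by linarith
    exact_mod_cast this
  have hna : 0 < n - α := by linarith
  have hq : 1 < q := by
    refine lt_of_le_of_lt ?_ hq1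
    rw [le_div_iff₀ hna]; linarith
  have hq0 : 0 < q := by linarith
  have hqn : n < q * (n - α) := (div_lt_iff₀ hna).1 hq1
  have hq1' : 1 / q < 1 := by rw [div_lt_one hq0]; exact hq
  have hqpos : 0 < 1 / q := by positivity
  set s : ℝ := 1 / q + α / n with hs
  have hαn' : 0 ≤ α / n := by positivity
  have hs0 : 0 < s := by linarith
  have hs1 : s < 1 := by
    rw [hs, div_add_div _ _ hq0.ne' hn0.ne', div_lt_one (by positivity)]
    linarith
  have hp : p ≤ 1 / s := by
    refine hpq.trans (le_of_eq ?_)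
    have : 0 < n + α * q := by positivity
    rw [hs]; field_simp
  have hB : BilB (kerT al A) s (1 - 1 / q) := by
    rcases hα0.eq_or_lt with h0 | h0
    · have h0' : α = 0 := h0.symm
      have hs' : s = 1 / q := by rw [hs, h0']; simp
      have hsum' : ∑ k, al k = n := by rw [hsum, h0']; simp
      have hm1 : 1 < m := by
        rw [h0'] at hm
        have : (1 : ℝ) < m := by simpa using hm
        exact_mod_cast this
      have hlt : ∀ k, al k < n := by
        intro k
        have : Nontrivial (Fin m) := Fin.nontrivial_iff_two_le.2 hm1
        obtain ⟨l, hl⟩ := exists_ne k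
        have h1 := Finset.add_sum_erase Finset.univ al (Finset.mem_univ k)
        have h2 := Finset.single_le_sum (f := al) (s := Finset.univ.erase k)
          (fun x _ => (hal x).le) (Finset.mem_erase.2 ⟨hl, Finset.mem_univ l⟩)
        have := hal l
        linarith
      obtain ⟨C, hC, hker⟩ := ker_zero_case hm0 al hal hsum' A (hA0 h0')
      refine BilB.mono (BilB.sum fun k => ?_) hker
      refine BilB.const_mul ?_ C hC
      exact BilB.comp (schur_bil s (1 - 1 / q) (al k) (hal k) (hlt k) hs0 (by linarith)
        (by rw [hs']; ring)) _ (mulVec_inj (A k) (hA k))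
    · refine BilB.mono (BilB.sum fun k => ?_) (ker_pos_case hm0 al hal _ hsum A)
      have hαn0 : 0 < α / n := by positivity
      exact BilB.comp (hls hn s (1 - 1 / q) (n - α) hs0 hs1 (by linarith) (by linarith)
        (by rw [hs]; linarith) (by rw [hs]; field_simp; ring)) _ (mulVec_inj (A k) (hA k))
  obtain ⟨C, hC, h⟩ := bil_to_norm (kerT_nonneg al A) hs0 hq hp0 hp hB
  refine ⟨C, hC, fun b => ?_⟩
  simp only [Tfs_eq]
  exact h b
end
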